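/- arXiv:2509.11069 — 4 statements merged into one kernel-verified Lean document; each statement's English description precedes it below -/
import Mathlib

section
/- Let f : ℝ × ℝⁿ → ℝⁿ be RAP in t uniformly with respect to x in compact sets, C² in x with second-order partial derivatives locally Lipschitz in x uniformly in t, and let ξ be the unique RAP solution of z' = f(t,z). Assume the variational system z' = (∂f/∂x)(t,ξ(t))·z has RAP coefficient matrix, possesses an (α,K,P)-exponential dichotomy, and its Green kernel has the RAP-integral property. Fix a delay a > 0 and let g : ℝ × ℝⁿ × ℝⁿ → ℝⁿ be bounded, RAP in t uniformly with respect to (x,z) in bounded sets, uniformly continuous there, and Lipschitz: ‖g(t,x,y) − g(t,z,v)‖ ≤ M₁(r)(‖x−z‖ + ‖y−v‖) for ‖x‖,‖y‖,‖z‖,‖v‖ ≤ r. Then there exist r > 0 and ν₀ = ν₀(r) > 0 such that for every ν ∈ [0,ν₀] the system y'(t) = f(t,y(t)) + ν·g(t, y(t), y(t−a)) has exactly one RAP solution ψ_ν with sup_{t∈ℝ} ‖ψ_ν(t) − ξ(t)‖ ≤ r, and ψ_ν(t) → ξ(t) for every t ∈ ℝ as ν → 0⁺. -/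
open MeasureTheory Filter Metric

noncomputable def opNorm {n : ℕ} (A : Matrix (Fin n) (Fin n) ℝ) : ℝ :=
  ‖LinearMap.toContinuousLinearMap (Matrix.toEuclideanLin A)‖

noncomputable def mulVecE {n : ℕ} (A : Matrix (Fin n) (Fin n) ℝ)
    (v : EuclideanSpace ℝ (Fin n)) : EuclideanSpace ℝ (Fin n) :=
  Matrix.toEuclideanLin A v

noncomputable def clmToMatrix {n : ℕ}
    (L : EuclideanSpace ℝ (Fin n) →L[ℝ] EuclideanSpace ℝ (Fin n)) :
    Matrix (Fin n) (Fin n) ℝ :=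
  Matrix.toEuclideanLin.symm (L : EuclideanSpace ℝ (Fin n) →ₗ[ℝ] EuclideanSpace ℝ (Fin n))

def RelativelyDense (S : Set ℝ) : Prop :=
  ∃ l > 0, ∀ a : ℝ, ∃ τ ∈ S, τ ∈ Set.Icc a (a + l)

def RAP {E : Type*} [NormedAddCommGroup E] (f : ℝ → E) : Prop :=
  (∃ C, ∀ t, ‖f t‖ ≤ C) ∧ UniformContinuous f ∧
  ∀ ε > 0, RelativelyDense
    {τ | Filter.limsup (fun t => ‖f (t + τ) - f t‖) (Filter.cocompact ℝ) < ε}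

def RAPUniform {E F : Type*} [NormedAddCommGroup E] [NormedAddCommGroup F]
    (f : ℝ → E → F) (S : Set E) : Prop :=
  (∃ C, ∀ t, ∀ x ∈ S, ‖f t x‖ ≤ C) ∧
  UniformContinuousOn (fun p : ℝ × E => f p.1 p.2) (Set.univ ×ˢ S) ∧
  ∀ ε > 0, RelativelyDense
    {τ | Filter.limsup (fun t => ⨆ x ∈ S, ‖f (t + τ) x - f t x‖) (Filter.cocompact ℝ) < ε}

def RAPMatrix {n : ℕ} (A : ℝ → Matrix (Fin n) (Fin n) ℝ) : Prop :=
  ∀ i j, RAP (fun t => A t i j)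

def IsFundamentalMatrix {n : ℕ} (A Φ : ℝ → Matrix (Fin n) (Fin n) ℝ) : Prop :=
  Φ 0 = 1 ∧ (∀ t, IsUnit (Φ t)) ∧
  ∀ t i j, HasDerivAt (fun τ => Φ τ i j) ((A t * Φ t) i j) t

def ExpDichotomy {n : ℕ} (Φ : ℝ → Matrix (Fin n) (Fin n) ℝ)
    (α K : ℝ) (P : Matrix (Fin n) (Fin n) ℝ) : Prop :=
  P * P = P ∧
  (∀ t s : ℝ, s ≤ t → opNorm (Φ t * P * (Φ s)⁻¹) ≤ K * Real.exp (-α * (t - s))) ∧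
  (∀ t s : ℝ, t < s → opNorm (Φ t * (1 - P) * (Φ s)⁻¹) ≤ K * Real.exp (-α * (s - t)))

noncomputable def GreenKernel {n : ℕ} (Φ : ℝ → Matrix (Fin n) (Fin n) ℝ)
    (P : Matrix (Fin n) (Fin n) ℝ) (t s : ℝ) : Matrix (Fin n) (Fin n) ℝ :=
  if s ≤ t then Φ t * P * (Φ s)⁻¹ else -(Φ t * (1 - P) * (Φ s)⁻¹)

def RAPIntegralProperty {n : ℕ} (G : ℝ → ℝ → Matrix (Fin n) (Fin n) ℝ) : Prop :=
  ∀ h : ℝ → EuclideanSpace ℝ (Fin n), RAP h →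
    RAP (fun t => ∫ s : ℝ, mulVecE (G t s) (h s))

/-!
Along `ξ` the deviation `z = y - ξ` of a solution `y` solves `z' = A(t) z + N(z)`, where `N(z)`
consists of the Taylor remainder of `f` at `ξ` and of the small delayed term. The dichotomy turns
this equation, for bounded `z`, into the fixed-point equation `z = ∫ G(·, s) N(z)(s) ds`. On a small
ball of RAP functions `N` has a small Lipschitz constant, so the right-hand side is a contraction,
and its fixed point has size `O(ν)` because `N(0) = O(ν)`.

That the right-hand side is again RAP rests on the fact that two RAP functions have a relatively
dense set of common remote almost periods. A relatively dense set of almost periods of a uniformly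
continuous function is syndetic after enlarging `ε`; if finitely many translates of `S` cover the
line and so do finitely many translates of `T`, then by pigeonhole the same is true of
`(S - S) ∩ (T - T)`, and differences of almost periods are almost periods.
-/

section RemoteAlmostPeriods

open scoped Pointwise

variable {X Y : Type*} [NormedAddCommGroup X] [NormedAddCommGroup Y] {u : ℝ → X} {v : ℝ → Y}

/-- A subset of an additive group is syndetic if finitely many of its translates cover the group. -/
def Syndetic {G : Type*} [AddGroup G] (S : Set G) : Prop :=
  ∃ T : Set G, T.Finite ∧ ∀ g, ∃ t ∈ T, g - t ∈ S

theorem Syndetic.sub_inter_sub {G : Type*} [AddCommGroup G] {P Q : Set G} (hP : Syndetic P)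
    (hQ : Syndetic Q) : Syndetic ((P - P) ∩ (Q - Q)) := by
  obtain ⟨S, hS, hPS⟩ := hP
  obtain ⟨T, hT, hQT⟩ := hQ
  choose p hpS hp using hPS
  choose q hqT hq using hQT
  have hfin : (Set.range fun g => (p g, q g)).Finite :=
    (hS.prod hT).subset (Set.range_subset_iff.2 fun g => ⟨hpS g, hqT g⟩)
  have : Finite (Set.range fun g => (p g, q g)) := hfin
  refine ⟨Set.range (Set.rangeSplitting fun g => (p g, q g)), Set.finite_range _, fun g => ?_⟩
  set c := Set.rangeSplitting (fun g => (p g, q g)) ⟨_, g, rfl⟩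
  have hcg : (p c, q c) = (p g, q g) :=
    Set.apply_rangeSplitting (fun g => (p g, q g)) ⟨_, g, rfl⟩
  obtain ⟨hpc, hqc⟩ := Prod.mk.inj hcg
  refine ⟨c, Set.mem_range_self _, ⟨g - p g, hp g, c - p c, hp c, ?_⟩,
    ⟨g - q g, hq g, c - q c, hq c, ?_⟩⟩
  · simp only [hpc, sub_sub_sub_cancel_right]
  · simp only [hqc, sub_sub_sub_cancel_right]

theorem RelativelyDense.mono {S T : Set ℝ} (hS : RelativelyDense S) (h : S ⊆ T) :
    RelativelyDense T := by
  obtain ⟨l, hl, H⟩ := hS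
  exact ⟨l, hl, fun a => (H a).imp fun τ hτ => ⟨h hτ.1, hτ.2⟩⟩

theorem Syndetic.relativelyDense {S : Set ℝ} (hS : Syndetic S) : RelativelyDense S := by
  obtain ⟨T, hT, hST⟩ := hS
  obtain ⟨B, hB, hTB⟩ := hT.isBounded.exists_pos_norm_le
  refine ⟨2 * B, by positivity, fun a => ?_⟩
  obtain ⟨t, ht, hmem⟩ := hST (a + B)
  have htB := abs_le.1 (hTB t ht)
  exact ⟨a + B - t, hmem, by linarith, by linarith⟩

/-- The remote `ε`-almost periods of `u`: the `τ` with `‖u (t + τ) - u t‖ ≤ ε` for all `t` outside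
a compact set. The condition avoids the junk values of `limsup`, and differs from the one in `RAP`
only by enlarging or shrinking `ε`. -/
def remoteAlmostPeriods (u : ℝ → X) (ε : ℝ) : Set ℝ :=
  {τ | ∀ᶠ t in cocompact ℝ, ‖u (t + τ) - u t‖ ≤ ε}

theorem tendsto_add_const_cocompact (c : ℝ) :
    Tendsto (fun t : ℝ => t + c) (cocompact ℝ) (cocompact ℝ) :=
  (Homeomorph.addRight c).isClosedEmbedding.tendsto_cocompact

theorem sub_mem_remoteAlmostPeriods {τ σ ε δ : ℝ} (hτ : τ ∈ remoteAlmostPeriods u ε)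
    (hσ : σ ∈ remoteAlmostPeriods u δ) : τ - σ ∈ remoteAlmostPeriods u (ε + δ) := by
  have hshift := tendsto_add_const_cocompact (-σ)
  filter_upwards [hshift.eventually hτ, hshift.eventually hσ] with t htτ htσ
  rw [show t + -σ + τ = t + (τ - σ) by ring] at htτ
  rw [neg_add_cancel_right] at htσ
  calc ‖u (t + (τ - σ)) - u t‖
      = ‖(u (t + (τ - σ)) - u (t + -σ)) - (u t - u (t + -σ))‖ := by
        rw [sub_sub_sub_cancel_right]
    _ ≤ ε + δ := (norm_sub_le _ _).trans (add_le_add htτ htσ)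

theorem remoteAlmostPeriods_sub_subset (u : ℝ → X) (ε : ℝ) :
    remoteAlmostPeriods u ε - remoteAlmostPeriods u ε ⊆ remoteAlmostPeriods u (ε + ε) :=
  Set.sub_subset_iff.2 fun _ hτ _ hσ => sub_mem_remoteAlmostPeriods hτ hσ

theorem RAP.relativelyDense (hu : RAP u) {ε : ℝ} (hε : 0 < ε) :
    RelativelyDense (remoteAlmostPeriods u ε) := by
  obtain ⟨⟨C, hC⟩, -, hdense⟩ := hu
  refine (hdense ε hε).mono fun τ hτ => ?_
  have hbdd : IsBoundedUnder (· ≤ ·) (cocompact ℝ) fun t => ‖u (t + τ) - u t‖ :=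
    isBoundedUnder_of ⟨C + C, fun t => (norm_sub_le _ _).trans (add_le_add (hC _) (hC _))⟩
  have hlt : limsup (fun t => ‖u (t + τ) - u t‖) (cocompact ℝ) < ε := hτ
  exact (eventually_lt_of_limsup_lt hlt hbdd).mono fun t ht => ht.le

theorem RAP.of_relativelyDense (hb : ∃ C, ∀ t, ‖u t‖ ≤ C) (huc : UniformContinuous u)
    (h : ∀ ε > 0, RelativelyDense (remoteAlmostPeriods u ε)) : RAP u := by
  refine ⟨hb, huc, fun ε hε => (h (ε / 2) (half_pos hε)).mono fun τ hτ => ?_⟩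
  have hcobdd : IsCoboundedUnder (· ≤ ·) (cocompact ℝ) fun t => ‖u (t + τ) - u t‖ :=
    (isBoundedUnder_of ⟨0, fun t => norm_nonneg _⟩).isCoboundedUnder_le
  exact (limsup_le_of_le hcobdd hτ).trans_lt (half_lt_self hε)

theorem exists_ball_subset_remoteAlmostPeriods (hu : UniformContinuous u)
    {ε : ℝ} (hε : 0 < ε) : ∃ δ > 0, ball 0 δ ⊆ remoteAlmostPeriods u ε := by
  obtain ⟨δ, hδ, h⟩ := Metric.uniformContinuous_iff.1 hu ε hε
  refine ⟨δ, hδ, fun τ hτ => Eventually.of_forall fun t => ?_⟩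
  rw [← dist_eq_norm]
  exact (h (by simpa only [dist_self_add_left, mem_ball_zero_iff] using hτ)).le

/- Bochner's argument: an almost period moves `τ` into a window of fixed length, and finitely many
points of the window suffice because small numbers are almost periods of a uniformly continuous
function. -/
theorem RAP.syndetic (hu : RAP u) {ε : ℝ} (hε : 0 < ε) : Syndetic (remoteAlmostPeriods u ε) := by
  obtain ⟨l, -, hl⟩ := hu.relativelyDense (half_pos hε)
  obtain ⟨δ, hδ, hball⟩ :=
    exists_ball_subset_remoteAlmostPeriods hu.2.1 (half_pos hε)
  obtain ⟨T, -, hT, hcover⟩ := (isCompact_Icc (a := 0) (b := l)).finite_cover_balls hδ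
  refine ⟨T, hT, fun τ => ?_⟩
  obtain ⟨σ, hσ, hσl⟩ := hl (τ - l)
  obtain ⟨t, ht, htσ⟩ := Set.mem_iUnion₂.1
    (hcover (show τ - σ ∈ Set.Icc 0 l from ⟨by linarith [hσl.2], by linarith [hσl.1]⟩))
  have hsmall : t - (τ - σ) ∈ remoteAlmostPeriods u (ε / 2) :=
    hball (by rwa [mem_ball_zero_iff, ← dist_eq_norm, dist_comm])
  refine ⟨t, ht, ?_⟩
  have hmem := sub_mem_remoteAlmostPeriods hσ hsmall
  rwa [add_halves, show σ - (t - (τ - σ)) = τ - t by ring] at hmem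

theorem RAP.prodMk (hu : RAP u) (hv : RAP v) : RAP fun t => (u t, v t) := by
  refine .of_relativelyDense ?_ (hu.2.1.prodMk hv.2.1) fun ε hε => ?_
  · obtain ⟨⟨C, hC⟩, D, hD⟩ := And.intro hu.1 hv.1
    exact ⟨max C D, fun t => max_le_max (hC t) (hD t)⟩
  · refine ((hu.syndetic (half_pos hε)).sub_inter_sub
      (hv.syndetic (half_pos hε))).relativelyDense.mono fun τ ⟨hτu, hτv⟩ => ?_
    have hτu := remoteAlmostPeriods_sub_subset u _ hτu
    have hτv := remoteAlmostPeriods_sub_subset v _ hτv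
    rw [add_halves] at hτu hτv
    filter_upwards [hτu, hτv] with t htu htv using max_le htu htv

theorem RAP.of_forall_exists_dominating (hb : ∃ C, ∀ t, ‖v t‖ ≤ C)
    (h : ∀ ε > 0, ∃ u : ℝ → X, RAP u ∧
      ∃ δ > 0, ∀ s t, ‖u s - u t‖ ≤ δ → ‖v s - v t‖ ≤ ε) : RAP v := by
  refine .of_relativelyDense hb (Metric.uniformContinuous_iff.2 fun ε hε => ?_) fun ε hε => ?_
  · obtain ⟨u, hu, δ, hδ, huv⟩ := h (ε / 2) (half_pos hε)
    obtain ⟨η, hη, hun⟩ := Metric.uniformContinuous_iff.1 hu.2.1 δ hδ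
    simp only [dist_eq_norm] at hun ⊢
    exact ⟨η, hη, fun {s t} hst => (huv s t (hun hst).le).trans_lt (half_lt_self hε)⟩
  · obtain ⟨u, hu, δ, hδ, huv⟩ := h ε hε
    exact (hu.relativelyDense hδ).mono fun τ hτ => hτ.mono fun t => huv (t + τ) t

theorem RAP.of_forall_exists_norm_sub_le
    (h : ∀ ε > 0, ∃ w : ℝ → X, RAP w ∧ ∀ t, ‖u t - w t‖ ≤ ε) : RAP u := by
  refine .of_forall_exists_dominating (X := X) ?_ fun ε hε => ?_
  · obtain ⟨w, hw, huw⟩ := h 1 one_pos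
    obtain ⟨C, hC⟩ := hw.1
    exact ⟨C + 1, fun t => (norm_le_insert' _ _).trans (add_le_add (hC t) (huw t))⟩
  · obtain ⟨w, hw, huw⟩ := h (ε / 3) (by positivity)
    refine ⟨w, hw, ε / 3, by positivity, fun s t hst => ?_⟩
    calc ‖u s - u t‖ = ‖(u s - w s) + (w s - w t) - (u t - w t)‖ := by congr 1; abel
      _ ≤ ‖u s - w s‖ + ‖w s - w t‖ + ‖u t - w t‖ :=
        (norm_sub_le _ _).trans (by gcongr; exact norm_add_le _ _)
      _ ≤ ε := by linarith [huw s, huw t]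

theorem RAP.comp_sub_const (hu : RAP u) (a : ℝ) : RAP fun t => u (t - a) := by
  refine .of_relativelyDense (hu.1.imp fun C hC t => hC _)
    (hu.2.1.comp (uniformContinuous_id.sub uniformContinuous_const)) fun ε hε => ?_
  refine (hu.relativelyDense hε).mono fun τ hτ => ?_
  filter_upwards [(tendsto_add_const_cocompact (-a)).eventually hτ] with t ht
  rwa [← sub_eq_add_neg, sub_add_eq_add_sub] at ht

section NormedSpace

variable [NormedSpace ℝ X] [NormedSpace ℝ Y]

theorem RAP.clm_comp (hu : RAP u) (L : X →L[ℝ] Y) : RAP fun t => L (u t) := by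
  refine .of_forall_exists_dominating ?_ fun ε hε => ⟨u, hu, ?_⟩
  · obtain ⟨C, hC⟩ := hu.1
    exact ⟨‖L‖ * C, fun t => L.le_opNorm_of_le (hC t)⟩
  · obtain ⟨δ, hδ, h⟩ := Metric.uniformContinuous_iff.1 L.uniformContinuous ε hε
    simp only [dist_eq_norm] at h
    exact ⟨δ / 2, half_pos hδ, fun s t hst => (h (hst.trans_lt (half_lt_self hδ))).le⟩

theorem RAP.add {w : ℝ → X} (hu : RAP u) (hw : RAP w) : RAP fun t => u t + w t :=
  (hu.prodMk hw).clm_comp (ContinuousLinearMap.fst ℝ X X + ContinuousLinearMap.snd ℝ X X)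

theorem RAP.sub {w : ℝ → X} (hu : RAP u) (hw : RAP w) : RAP fun t => u t - w t :=
  (hu.prodMk hw).clm_comp (ContinuousLinearMap.fst ℝ X X - ContinuousLinearMap.snd ℝ X X)

theorem RAP.const_smul (hu : RAP u) (c : ℝ) : RAP fun t => c • u t :=
  hu.clm_comp (c • .id ℝ X)

end NormedSpace

end RemoteAlmostPeriods

section Superposition

open scoped BoundedContinuousFunction

variable {X Y : Type*} [NormedAddCommGroup X] [NormedAddCommGroup Y]
  {F : ℝ → X → Y} {S : Set X} {u : ℝ → X}

/-- The restriction of `F t` to `S` as an element of the Banach space of bounded continuous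
functions on `S`. Being RAP uniformly on `S` means that `t ↦ F t` is RAP in this space. -/
noncomputable def RAPUniform.slice (hF : RAPUniform F S) (t : ℝ) : S →ᵇ Y :=
  .ofNormedAddCommGroup (fun x => F t x)
    (hF.2.1.continuousOn.comp_continuous (f := fun x : S => (t, (x : X)))
      (continuous_const.prodMk continuous_subtype_val) fun x => ⟨trivial, x.2⟩)
    hF.1.choose fun x => hF.1.choose_spec t x x.2

theorem RAPUniform.norm_slice_sub_slice (hF : RAPUniform F S) (s t : ℝ) :
    ‖hF.slice s - hF.slice t‖ = ⨆ x ∈ S, ‖F s x - F t x‖ := by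
  rw [BoundedContinuousFunction.norm_eq_iSup_norm]
  refine ciSup_subtype (f := fun x : S => ‖F s x - F t x‖) ?_ ?_
  · exact ⟨‖hF.slice s - hF.slice t‖, Set.forall_mem_range.2 fun x =>
      (hF.slice s - hF.slice t).norm_coe_le_norm x⟩
  · rw [Real.sSup_empty]
    exact Real.iSup_nonneg fun x => norm_nonneg _

theorem RAPUniform.rap_slice (hF : RAPUniform F S) : RAP hF.slice := by
  refine ⟨?_, Metric.uniformContinuous_iff.2 fun ε hε => ?_, fun ε hε => ?_⟩
  · obtain ⟨C, hC⟩ := hF.1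
    exact ⟨|C|, fun t => (BoundedContinuousFunction.norm_le (abs_nonneg C)).2
      fun x => (hC t x x.2).trans (le_abs_self C)⟩
  · obtain ⟨δ, hδ, h⟩ := Metric.uniformContinuousOn_iff.1 hF.2.1 (ε / 2) (half_pos hε)
    refine ⟨δ, hδ, fun {s t} hst => lt_of_le_of_lt ?_ (half_lt_self hε)⟩
    refine (BoundedContinuousFunction.dist_le (half_pos hε).le).2 fun x => ?_
    exact (h (s, x) ⟨trivial, x.2⟩ (t, x) ⟨trivial, x.2⟩
      (by rwa [Prod.dist_eq, dist_self, max_eq_left dist_nonneg])).le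
  · simpa only [hF.norm_slice_sub_slice] using hF.2.2 ε hε

theorem RAPUniform.comp (hF : RAPUniform F S) (hu : RAP u) (huS : ∀ t, u t ∈ S) :
    RAP fun t => F t (u t) := by
  refine .of_forall_exists_dominating (hF.1.imp fun C hC t => hC t _ (huS t)) fun ε hε =>
    ⟨_, hF.rap_slice.prodMk hu, ?_⟩
  obtain ⟨δ, hδ, h⟩ := Metric.uniformContinuousOn_iff.1 hF.2.1 (ε / 2) (half_pos hε)
  refine ⟨min (ε / 2) (δ / 2), by positivity, fun s t hst => ?_⟩
  obtain ⟨hslice, hust⟩ := max_le_iff.1 hst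
  have htime : ‖F s (u s) - F t (u s)‖ ≤ ε / 2 :=
    ((hF.slice s - hF.slice t).norm_coe_le_norm ⟨u s, huS s⟩).trans
      (hslice.trans (min_le_left _ _))
  have hspace : ‖F t (u s) - F t (u t)‖ < ε / 2 := by
    rw [← dist_eq_norm]
    refine h (t, u s) ⟨trivial, huS s⟩ (t, u t) ⟨trivial, huS t⟩ ?_
    rw [Prod.dist_eq, dist_self, max_eq_right dist_nonneg, dist_eq_norm]
    exact (hust.trans (min_le_right _ _)).trans_lt (half_lt_self hδ)
  calc ‖F s (u s) - F t (u t)‖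
      ≤ ‖F s (u s) - F t (u s)‖ + ‖F t (u s) - F t (u t)‖ := norm_sub_le_norm_sub_add_norm_sub _ _ _
    _ ≤ ε := by linarith

end Superposition

section GreenIntegral

theorem integrable_exp_neg_mul_abs {α : ℝ} (hα : 0 < α) :
    Integrable fun x : ℝ => Real.exp (-α * |x|) := by
  rw [← integrableOn_univ, ← Set.Iic_union_Ioi (a := (0 : ℝ))]
  refine .union ?_ ?_
  · exact (integrableOn_exp_mul_Iic hα 0).congr_fun
      (fun x hx => by simp only [abs_of_nonpos (Set.mem_Iic.1 hx), neg_mul_neg]) measurableSet_Iic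
  · exact (integrableOn_exp_mul_Ioi (neg_neg_of_pos hα) 0).congr_fun
      (fun x hx => by simp only [abs_of_pos (Set.mem_Ioi.1 hx)]) measurableSet_Ioi

theorem integral_exp_neg_mul_abs {α : ℝ} (hα : 0 < α) :
    ∫ x : ℝ, Real.exp (-α * |x|) = 2 / α := by
  rw [integral_comp_abs (f := fun x => Real.exp (-α * x)),
    integral_exp_mul_Ioi (neg_neg_of_pos hα), mul_zero, Real.exp_zero, neg_div_neg_eq,
    mul_one_div]

theorem hasDerivAt_units_inv {R : Type*} [NormedRing R] [NormedAlgebra ℝ R]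
    [HasSummableGeomSeries R] {U : ℝ → Rˣ} {U' : R} {t : ℝ}
    (hU : HasDerivAt (fun s => (U s : R)) U' t) :
    HasDerivAt (fun s => (↑(U s)⁻¹ : R)) (-(↑(U t)⁻¹ * U' * ↑(U t)⁻¹)) t := by
  have h := (hasFDerivAt_ringInverse (𝕜 := ℝ) (U t)).comp_hasDerivAt t hU
  simpa [Function.comp_def] using! h

variable {E : Type*} [NormedAddCommGroup E] [NormedSpace ℝ E]

section HalfLines

variable [CompleteSpace E] {φ : ℝ → E} (hφ : Continuous φ)

include hφ

theorem hasDerivAt_integral_Iic (hint : ∀ t, IntegrableOn φ (Set.Iic t)) (t : ℝ) :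
    HasDerivAt (fun t => ∫ s in Set.Iic t, φ s) (φ t) t := by
  have heq : (fun t => ∫ s in Set.Iic t, φ s) =
      fun t => (∫ s in Set.Iic 0, φ s) + ∫ s in (0 : ℝ)..t, φ s := by
    funext t
    rw [← intervalIntegral.integral_Iic_sub_Iic (hint 0) (hint t), add_sub_cancel]
  rw [heq]
  exact (hφ.integral_hasStrictDerivAt 0 t).hasDerivAt.const_add _

theorem hasDerivAt_integral_Ioi (hint : ∀ t, IntegrableOn φ (Set.Ioi t)) (t : ℝ) :
    HasDerivAt (fun t => ∫ s in Set.Ioi t, φ s) (-φ t) t := by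
  have heq : (fun t => ∫ s in Set.Ioi t, φ s) =
      fun t => (∫ s in Set.Ioi 0, φ s) - ∫ s in (0 : ℝ)..t, φ s := by
    funext t
    rw [← intervalIntegral.integral_Ioi_sub_Ioi' (hint 0) (hint t), sub_sub_cancel]
  rw [heq]
  exact (hφ.integral_hasStrictDerivAt 0 t).hasDerivAt.const_sub _

end HalfLines

/-- The exponential dichotomy of `z' = A(t) z`, with operators in place of matrices: `U t` is the
(invertible) value at time `t` of a fundamental solution, not normalised at `0`. The two estimates
force `P` to be a projection. -/
structure OperatorExpDichotomy (A : ℝ → E →L[ℝ] E) (U : ℝ → (E →L[ℝ] E)ˣ) (P : E →L[ℝ] E)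
    (α K : ℝ) : Prop where
  rate_pos : 0 < α
  hasDerivAt (t : ℝ) : HasDerivAt (fun s => (U s : E →L[ℝ] E)) (A t * U t) t
  norm_stable_le {t s : ℝ} (hst : s ≤ t) :
    ‖(U t * P * ↑(U s)⁻¹ : E →L[ℝ] E)‖ ≤ K * Real.exp (-α * (t - s))
  norm_unstable_le {t s : ℝ} (hts : t < s) :
    ‖(U t * (1 - P) * ↑(U s)⁻¹ : E →L[ℝ] E)‖ ≤ K * Real.exp (-α * (s - t))

/-- The Green kernel of the dichotomy `(U, P)`. -/
noncomputable def greenOperator (U : ℝ → (E →L[ℝ] E)ˣ) (P : E →L[ℝ] E) (t s : ℝ) : E →L[ℝ] E :=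
  if s ≤ t then U t * P * ↑(U s)⁻¹ else -(U t * (1 - P) * ↑(U s)⁻¹)

/-- The integral of `h` against the Green kernel, for a dichotomy the only bounded solution of
`z' = A(t) z + h(t)`. -/
noncomputable def greenIntegral (U : ℝ → (E →L[ℝ] E)ˣ) (P : E →L[ℝ] E) (h : ℝ → E) (t : ℝ) : E :=
  ∫ s, greenOperator U P t s (h s)

namespace OperatorExpDichotomy

variable {A : ℝ → E →L[ℝ] E} {U : ℝ → (E →L[ℝ] E)ˣ} {P : E →L[ℝ] E} {α K : ℝ}
  (H : OperatorExpDichotomy A U P α K) {h h' w z : ℝ → E} {C : ℝ}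

include H

theorem two_mul_div_rate_nonneg : 0 ≤ 2 * K / α := by
  have hK : 0 ≤ K := by
    simpa only [sub_self, mul_zero, Real.exp_zero, mul_one] using
      (norm_nonneg _).trans (H.norm_stable_le (le_refl 0))
  exact div_nonneg (mul_nonneg zero_le_two hK) H.rate_pos.le

theorem norm_greenOperator_le (t s : ℝ) :
    ‖greenOperator U P t s‖ ≤ K * Real.exp (-α * |t - s|) := by
  rw [greenOperator]
  split_ifs with hst
  · rw [abs_of_nonneg (sub_nonneg.2 hst)]
    exact H.norm_stable_le hst
  · have hts := not_le.1 hst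
    rw [norm_neg, abs_of_neg (sub_neg.2 hts), neg_sub]
    exact H.norm_unstable_le hts

theorem norm_greenOperator_apply_le (hb : ∀ t, ‖h t‖ ≤ C) (t s : ℝ) :
    ‖greenOperator U P t s (h s)‖ ≤ K * C * Real.exp (-α * |t - s|) := by
  refine ((greenOperator U P t s).le_of_opNorm_le_of_le
    (H.norm_greenOperator_le t s) (hb s)).trans_eq (mul_right_comm _ _ _)

theorem norm_greenIntegral_le (hb : ∀ t, ‖h t‖ ≤ C) (t : ℝ) :
    ‖greenIntegral U P h t‖ ≤ 2 * K / α * C := by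
  calc ‖greenIntegral U P h t‖ ≤ ∫ s, K * C * Real.exp (-α * |t - s|) :=
        norm_integral_le_of_norm_le
          (((integrable_exp_neg_mul_abs H.rate_pos).comp_sub_left t).const_mul (K * C))
          (.of_forall (H.norm_greenOperator_apply_le hb t))
    _ = 2 * K / α * C := by
        rw [integral_const_mul, integral_sub_left_eq_self (fun x => Real.exp (-α * |x|)) volume t,
          integral_exp_neg_mul_abs H.rate_pos]
        ring

variable [CompleteSpace E]

theorem continuous_inv : Continuous fun t => (↑(U t)⁻¹ : E →L[ℝ] E) :=
  continuous_iff_continuousAt.2 fun t => (hasDerivAt_units_inv (H.hasDerivAt t)).continuousAt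

theorem integrable_greenOperator_apply (hc : Continuous h) (hb : ∀ t, ‖h t‖ ≤ C) (t : ℝ) :
    Integrable fun s => greenOperator U P t s (h s) := by
  refine .mono' (((integrable_exp_neg_mul_abs H.rate_pos).comp_sub_left t).const_mul (K * C)) ?_
    (.of_forall (H.norm_greenOperator_apply_le hb t))
  have hinv := H.continuous_inv
  have hmeas : StronglyMeasurable (greenOperator U P t) :=
    .ite measurableSet_Iic (Continuous.stronglyMeasurable (by fun_prop))
      (Continuous.stronglyMeasurable (by fun_prop))
  exact (ContinuousLinearMap.id ℝ (E →L[ℝ] E)).aestronglyMeasurable_comp₂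
    hmeas.aestronglyMeasurable hc.aestronglyMeasurable

theorem integrableOn_Iic (hc : Continuous h) (hb : ∀ t, ‖h t‖ ≤ C) (t : ℝ) :
    IntegrableOn (fun s => P ((↑(U s)⁻¹ : E →L[ℝ] E) (h s))) (Set.Iic t) := by
  refine (((↑(U t)⁻¹ : E →L[ℝ] E).integrable_comp
    (H.integrable_greenOperator_apply hc hb t)).integrableOn.congr_fun ?_ measurableSet_Iic)
  intro s hs
  have hUU (x : E) : (↑(U t)⁻¹ : E →L[ℝ] E) ((U t : E →L[ℝ] E) x) = x :=
    DFunLike.congr_fun (U t).inv_mul x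
  simp only [greenOperator, if_pos (Set.mem_Iic.1 hs), mul_apply_eq_comp, hUU]

theorem integrableOn_Ioi (hc : Continuous h) (hb : ∀ t, ‖h t‖ ≤ C) (t : ℝ) :
    IntegrableOn (fun s => (1 - P) ((↑(U s)⁻¹ : E →L[ℝ] E) (h s))) (Set.Ioi t) := by
  refine (((-↑(U t)⁻¹ : E →L[ℝ] E).integrable_comp
    (H.integrable_greenOperator_apply hc hb t)).integrableOn.congr_fun ?_ measurableSet_Ioi)
  intro s hs
  have hUU (x : E) : (↑(U t)⁻¹ : E →L[ℝ] E) ((U t : E →L[ℝ] E) x) = x :=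
    DFunLike.congr_fun (U t).inv_mul x
  simp only [greenOperator, if_neg (not_le.2 (Set.mem_Ioi.1 hs)), mul_apply_eq_comp, hUU,
    neg_apply, map_neg, neg_neg]

theorem greenIntegral_eq (hc : Continuous h) (hb : ∀ t, ‖h t‖ ≤ C) (t : ℝ) :
    greenIntegral U P h t = (U t : E →L[ℝ] E)
      ((∫ s in Set.Iic t, P ((↑(U s)⁻¹ : E →L[ℝ] E) (h s))) -
        ∫ s in Set.Ioi t, (1 - P) ((↑(U s)⁻¹ : E →L[ℝ] E) (h s))) := by
  have hint := H.integrable_greenOperator_apply hc hb t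
  rw [greenIntegral, ← intervalIntegral.integral_Iic_add_Ioi hint.integrableOn hint.integrableOn
    (b := t), map_sub, ← ContinuousLinearMap.integral_comp_comm _ (H.integrableOn_Iic hc hb t),
    ← ContinuousLinearMap.integral_comp_comm _ (H.integrableOn_Ioi hc hb t), sub_eq_add_neg,
    ← integral_neg]
  congr 1
  · refine setIntegral_congr_fun measurableSet_Iic fun s hs => ?_
    simp only [greenOperator, if_pos (Set.mem_Iic.1 hs), mul_apply_eq_comp]
  · refine setIntegral_congr_fun measurableSet_Ioi fun s hs => ?_
    simp only [greenOperator, if_neg (not_le.2 (Set.mem_Ioi.1 hs)), mul_apply_eq_comp, neg_apply]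

theorem hasDerivAt_greenIntegral (hc : Continuous h) (hb : ∀ t, ‖h t‖ ≤ C) (t : ℝ) :
    HasDerivAt (greenIntegral U P h) (A t (greenIntegral U P h t) + h t) t := by
  have hinv := H.continuous_inv
  have hstable := hasDerivAt_integral_Iic (by fun_prop) (H.integrableOn_Iic hc hb) t
  have hunstable := hasDerivAt_integral_Ioi (by fun_prop) (H.integrableOn_Ioi hc hb) t
  have hUU : (U t : E →L[ℝ] E) ((↑(U t)⁻¹ : E →L[ℝ] E) (h t)) = h t :=
    DFunLike.congr_fun (U t).mul_inv (h t)
  rw [funext (H.greenIntegral_eq hc hb)]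
  refine ((H.hasDerivAt t).clm_apply (hstable.sub hunstable)).congr_deriv ?_
  simp only [Pi.sub_apply, mul_apply_eq_comp, sub_apply, one_apply_eq_self, sub_neg_eq_add,
    add_sub_cancel, hUU]

theorem greenIntegral_sub (hc : Continuous h) (hb : ∀ t, ‖h t‖ ≤ C) (hc' : Continuous h')
    {C' : ℝ} (hb' : ∀ t, ‖h' t‖ ≤ C') (t : ℝ) :
    greenIntegral U P h t - greenIntegral U P h' t = greenIntegral U P (fun s => h s - h' s) t := by
  simp only [greenIntegral, map_sub]
  exact (integral_sub (H.integrable_greenOperator_apply hc hb t)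
    (H.integrable_greenOperator_apply hc' hb' t)).symm

theorem exists_inv_apply_eq_of_hasDerivAt (hw : ∀ t, HasDerivAt w (A t (w t)) t) :
    ∃ c, ∀ t, (↑(U t)⁻¹ : E →L[ℝ] E) (w t) = c := by
  have hderiv (t : ℝ) : HasDerivAt (fun s => (↑(U s)⁻¹ : E →L[ℝ] E) (w s)) 0 t := by
    refine ((hasDerivAt_units_inv (H.hasDerivAt t)).clm_apply (hw t)).congr_deriv ?_
    rw [mul_assoc, mul_assoc, Units.mul_inv, mul_one, neg_apply, mul_apply_eq_comp, neg_add_cancel]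
  exact ⟨_, fun t => is_const_of_deriv_eq_zero (fun s => (hderiv s).differentiableAt)
    (fun s => (hderiv s).deriv) t 0⟩

/- With `c = U s⁻¹ (w s)`, the stable part `U t P c = U t P U s⁻¹ (w s)` of `w t` vanishes as
`s → -∞`, and the unstable part as `s → ∞`. -/
theorem eq_zero_of_bounded (hb : ∀ t, ‖w t‖ ≤ C) (hw : ∀ t, HasDerivAt w (A t (w t)) t) (t : ℝ) :
    w t = 0 := by
  obtain ⟨c, hc⟩ := H.exists_inv_apply_eq_of_hasDerivAt hw
  have hlim : Tendsto (fun s => K * Real.exp (-α * s) * C) atTop (nhds 0) := by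
    simpa only [mul_zero, zero_mul, Function.comp_def, id] using ((Real.tendsto_exp_atBot.comp
      (tendsto_id.const_mul_atTop_of_neg (neg_neg_of_pos H.rate_pos))).const_mul K).mul_const C
  have hstable : (U t : E →L[ℝ] E) (P c) = 0 := by
    refine norm_le_zero_iff.1 (ge_of_tendsto hlim ?_)
    filter_upwards [eventually_ge_atTop 0] with s hs
    rw [← hc (t - s)]
    have hle := H.norm_stable_le (sub_le_self t hs)
    rw [sub_sub_cancel] at hle
    simpa only [mul_apply_eq_comp] using
      ContinuousLinearMap.le_of_opNorm_le_of_le _ hle (hb (t - s))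
  have hunstable : (U t : E →L[ℝ] E) ((1 - P) c) = 0 := by
    refine norm_le_zero_iff.1 (ge_of_tendsto hlim ?_)
    filter_upwards [eventually_gt_atTop 0] with s hs
    rw [← hc (t + s)]
    have hle := H.norm_unstable_le (lt_add_of_pos_right t hs)
    rw [add_sub_cancel_left] at hle
    simpa only [mul_apply_eq_comp] using
      ContinuousLinearMap.le_of_opNorm_le_of_le _ hle (hb (t + s))
  calc w t = (U t : E →L[ℝ] E) ((↑(U t)⁻¹ : E →L[ℝ] E) (w t)) :=
        (DFunLike.congr_fun (U t).mul_inv (w t)).symm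
    _ = (U t : E →L[ℝ] E) (P c) + (U t : E →L[ℝ] E) ((1 - P) c) := by
        rw [hc, ← map_add, sub_apply, one_apply_eq_self, add_sub_cancel]
    _ = 0 := by rw [hstable, hunstable, add_zero]

theorem hasDerivAt_iff_eq_greenIntegral (hzb : ∃ D, ∀ t, ‖z t‖ ≤ D) (hc : Continuous h)
    (hb : ∀ t, ‖h t‖ ≤ C) :
    (∀ t, HasDerivAt z (A t (z t) + h t) t) ↔ ∀ t, z t = greenIntegral U P h t := by
  refine ⟨fun hz t => ?_, fun hz t => ?_⟩
  · obtain ⟨D, hD⟩ := hzb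
    refine sub_eq_zero.1 (H.eq_zero_of_bounded (w := fun t => z t - greenIntegral U P h t)
      (fun t => (norm_sub_le _ _).trans (add_le_add (hD t) (H.norm_greenIntegral_le hb t)))
      (fun t => ((hz t).sub (H.hasDerivAt_greenIntegral hc hb t)).congr_deriv ?_) t)
    rw [add_sub_add_right_eq_sub, map_sub]
  · rw [funext hz]
    exact H.hasDerivAt_greenIntegral hc hb t

end OperatorExpDichotomy

end GreenIntegral

section Contraction

open scoped BoundedContinuousFunction

variable {E : Type*} [NormedAddCommGroup E]

theorem RAP.zero : RAP fun _ : ℝ => (0 : E) := by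
  refine ⟨⟨0, fun _ => norm_zero.le⟩, uniformContinuous_const, fun ε hε =>
    ⟨1, one_pos, fun a => ⟨a, ?_, le_rfl, (lt_add_one a).le⟩⟩⟩
  simpa only [Set.mem_ofPred_eq, sub_self, norm_zero, limsup_const] using hε

/-- The closed ball of radius `r` in the space of RAP functions with the supremum norm. -/
def rapBall (E : Type*) [NormedAddCommGroup E] (r : ℝ) : Set (ℝ → E) :=
  {z | RAP z ∧ ∀ t, ‖z t‖ ≤ r}

/-- The map `N` sends the ball of radius `r` to RAP functions and is `L`-Lipschitz there for the
supremum norm. The norm of a function enters through its upper bounds `B`, so that `N` may act on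
arbitrary functions. -/
structure RAPLipschitzOnBall (N : (ℝ → E) → ℝ → E) (r L : ℝ) : Prop where
  rap {z : ℝ → E} (hz : z ∈ rapBall E r) : RAP (N z)
  norm_sub_le {z w : ℝ → E} (hz : z ∈ rapBall E r) (hw : w ∈ rapBall E r) {B : ℝ}
    (hB : ∀ t, ‖z t - w t‖ ≤ B) (t : ℝ) : ‖N z t - N w t‖ ≤ L * B

theorem zero_mem_rapBall {r : ℝ} (hr : 0 ≤ r) : (0 : ℝ → E) ∈ rapBall E r :=
  ⟨RAP.zero, fun _ => norm_zero.trans_le hr⟩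

theorem isClosed_setOf_coe_mem_rapBall (r : ℝ) :
    IsClosed {z : ℝ →ᵇ E | (z : ℝ → E) ∈ rapBall E r} := by
  refine isClosed_of_closure_subset fun z hz => ⟨?_, fun t => ?_⟩
  · refine RAP.of_forall_exists_norm_sub_le fun ε hε => ?_
    obtain ⟨w, hw, hzw⟩ := Metric.mem_closure_iff.1 hz ε hε
    exact ⟨w, hw.1, fun t => (dist_eq_norm (z t) (w t)).symm.trans_le
      ((BoundedContinuousFunction.dist_coe_le_dist t).trans hzw.le)⟩
  · have hcl : IsClosed {w : ℝ →ᵇ E | ‖w t‖ ≤ r} :=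
      isClosed_le (continuous_eval_const t).norm continuous_const
    exact closure_minimal (fun w hw => hw.2 t) hcl hz

namespace RAPLipschitzOnBall

variable {N N' T : (ℝ → E) → ℝ → E} {r L L' c : ℝ}

theorem mono (hN : RAPLipschitzOnBall N r L) (hLL' : L ≤ L') : RAPLipschitzOnBall N r L' where
  rap := hN.rap
  norm_sub_le hz hw _ hB t := (hN.norm_sub_le hz hw hB t).trans
    (mul_le_mul_of_nonneg_right hLL' ((norm_nonneg _).trans (hB t)))

theorem add [NormedSpace ℝ E] (hN : RAPLipschitzOnBall N r L) (hN' : RAPLipschitzOnBall N' r L') :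
    RAPLipschitzOnBall (fun z t => N z t + N' z t) r (L + L') where
  rap hz := (hN.rap hz).add (hN'.rap hz)
  norm_sub_le {z w} hz hw B hB t := by
    rw [add_sub_add_comm, add_mul]
    exact norm_add_le_of_le (hN.norm_sub_le hz hw hB t) (hN'.norm_sub_le hz hw hB t)

theorem const_smul [NormedSpace ℝ E] (hN : RAPLipschitzOnBall N r L) (c : ℝ) :
    RAPLipschitzOnBall (fun z t => c • N z t) r (|c| * L) where
  rap hz := (hN.rap hz).const_smul c
  norm_sub_le {z w} hz hw B hB t := by
    rw [← smul_sub, norm_smul, Real.norm_eq_abs, mul_assoc]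
    exact mul_le_mul_of_nonneg_left (hN.norm_sub_le hz hw hB t) (abs_nonneg c)

theorem norm_le (hN : RAPLipschitzOnBall N r L) (hN0 : ∀ t, ‖N 0 t‖ ≤ c) (hr : 0 ≤ r)
    {z : ℝ → E} (hz : z ∈ rapBall E r) (t : ℝ) : ‖N z t‖ ≤ L * r + c := by
  have hsub := hN.norm_sub_le hz (zero_mem_rapBall hr)
    (fun t => (congrArg norm (sub_zero (z t))).trans_le (hz.2 t)) t
  calc ‖N z t‖ = ‖(N z t - N 0 t) + N 0 t‖ := by rw [sub_add_cancel]
    _ ≤ L * r + c := norm_add_le_of_le hsub (hN0 t)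

/- Banach's fixed point theorem, with its a priori estimate started at `0`. -/
theorem exists_fixedPoint [CompleteSpace E] (hT : RAPLipschitzOnBall T r L) (hL₀ : 0 ≤ L)
    (hL₁ : L < 1) (hT0 : ∀ t, ‖T 0 t‖ ≤ c) (hc : L * r + c ≤ r) :
    ∃ z ∈ rapBall E r, T z = z ∧ (∀ t, ‖z t‖ ≤ c / (1 - L)) ∧
      ∀ w ∈ rapBall E r, T w = w → w = z := by
  lift L to NNReal using hL₀
  have hc0 : 0 ≤ c := (norm_nonneg _).trans (hT0 0)
  have hr : 0 ≤ r := by nlinarith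
  have hmaps {z : ℝ → E} (hz : z ∈ rapBall E r) : T z ∈ rapBall E r :=
    ⟨hT.rap hz, fun t => (hT.norm_le hT0 hr hz t).trans hc⟩
  let Ball : Set (ℝ →ᵇ E) := {z : ℝ →ᵇ E | (z : ℝ → E) ∈ rapBall E r}
  let toBCF (z : ℝ → E) (hz : z ∈ rapBall E r) : Ball :=
    ⟨.ofNormedAddCommGroup z hz.1.2.1.continuous r hz.2, hz⟩
  let S (z : Ball) := toBCF (T z.1) (hmaps z.2)
  have hS : ContractingWith L S := by
    refine ⟨mod_cast hL₁, LipschitzWith.of_dist_le_mul fun z w => ?_⟩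
    refine (BoundedContinuousFunction.dist_le (by positivity)).2 fun t => ?_
    rw [dist_eq_norm]
    exact hT.norm_sub_le z.2 w.2 (fun t => (dist_eq_norm (z.1 t) (w.1 t)).symm.trans_le
      (BoundedContinuousFunction.dist_coe_le_dist t)) t
  have := (isClosed_setOf_coe_mem_rapBall (E := E) r).completeSpace_coe
  have : Nonempty Ball := ⟨toBCF 0 (zero_mem_rapBall hr)⟩
  let z : Ball := hS.fixedPoint S
  have hdist : dist (toBCF 0 (zero_mem_rapBall hr)) (S (toBCF 0 (zero_mem_rapBall hr))) ≤ c :=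
    (BoundedContinuousFunction.dist_le hc0).2 fun t => (dist_zero_left _).trans_le (hT0 t)
  refine ⟨z.1, z.2, congrArg (fun w => (w.1 : ℝ → E)) hS.fixedPoint_isFixedPt, fun t => ?_,
    fun w hw hTw => ?_⟩
  · rw [← dist_zero_left]
    exact (BoundedContinuousFunction.dist_coe_le_dist t).trans ((hS.dist_fixedPoint_le _).trans
      (div_le_div_of_nonneg_right hdist (sub_nonneg.2 hL₁.le)))
  · have hfix : Function.IsFixedPt S (toBCF w hw) :=
      Subtype.ext (BoundedContinuousFunction.ext (congrFun hTw))
    exact congrArg (fun w => (w.1 : ℝ → E)) (hS.fixedPoint_unique hfix)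

end RAPLipschitzOnBall

namespace OperatorExpDichotomy

variable [NormedSpace ℝ E] [CompleteSpace E] {A : ℝ → E →L[ℝ] E} {U : ℝ → (E →L[ℝ] E)ˣ}
  {P : E →L[ℝ] E} {α K : ℝ} (H : OperatorExpDichotomy A U P α K)
  {N : (ℝ → E) → ℝ → E} {r L c : ℝ}

include H

theorem rapLipschitzOnBall_greenIntegral (hG : ∀ h : ℝ → E, RAP h → RAP (greenIntegral U P h))
    (hN : RAPLipschitzOnBall N r L) :
    RAPLipschitzOnBall (fun z => greenIntegral U P (N z)) r (2 * K / α * L) where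
  rap hz := hG _ (hN.rap hz)
  norm_sub_le {z w} hz hw B hB t := by
    obtain ⟨⟨C, hC⟩, hcz, -⟩ := hN.rap hz
    obtain ⟨⟨D, hD⟩, hcw, -⟩ := hN.rap hw
    rw [H.greenIntegral_sub hcz.continuous hC hcw.continuous hD, mul_assoc]
    exact H.norm_greenIntegral_le (hN.norm_sub_le hz hw hB) t

theorem exists_rap_solution (hG : ∀ h : ℝ → E, RAP h → RAP (greenIntegral U P h))
    (hN : RAPLipschitzOnBall N r L) (hN0 : ∀ t, ‖N 0 t‖ ≤ c) (hL₀ : 0 ≤ L)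
    (hL₁ : 2 * K / α * L < 1) (hc : 2 * K / α * L * r + 2 * K / α * c ≤ r) :
    ∃ z ∈ rapBall E r, (∀ t, HasDerivAt z (A t (z t) + N z t) t) ∧
      (∀ t, ‖z t‖ ≤ 2 * K / α * c / (1 - 2 * K / α * L)) ∧
      ∀ w ∈ rapBall E r, (∀ t, HasDerivAt w (A t (w t) + N w t) t) → w = z := by
  have hsol {z : ℝ → E} (hz : z ∈ rapBall E r) :
      (∀ t, HasDerivAt z (A t (z t) + N z t) t) ↔ greenIntegral U P (N z) = z := by
    obtain ⟨⟨C, hC⟩, hc, -⟩ := hN.rap hz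
    rw [H.hasDerivAt_iff_eq_greenIntegral hz.1.1 hc.continuous hC, ← funext_iff, eq_comm]
  obtain ⟨z, hz, hTz, hzc, huniq⟩ :=
    (H.rapLipschitzOnBall_greenIntegral hG hN).exists_fixedPoint
      (mul_nonneg H.two_mul_div_rate_nonneg hL₀) hL₁ (H.norm_greenIntegral_le hN0) hc
  exact ⟨z, hz, (hsol hz).2 hTz, hzc, fun w hw hw' => huniq w hw ((hsol hw).1 hw')⟩

end OperatorExpDichotomy

end Contraction

section Perturbation

open scoped NNReal

theorem RAP.comp_of_forall_closedBall {X Y : Type*} [NormedAddCommGroup X] [NormedAddCommGroup Y]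
    {F : ℝ → X → Y} {u : ℝ → X} (hF : ∀ ρ, RAPUniform F (closedBall 0 ρ)) (hu : RAP u) :
    RAP fun t => F t (u t) := by
  obtain ⟨C, hC⟩ := hu.1
  exact (hF C).comp hu fun t => mem_closedBall_zero_iff.2 (hC t)

variable {E : Type*} [NormedAddCommGroup E] {f : ℝ → E → E} {ξ z : ℝ → E} {a r : ℝ}
  {g : ℝ → E → E → E}

theorem RAP.comp_delay (hg : ∀ ρ, RAPUniform (fun t (p : E × E) => g t p.1 p.2) (closedBall 0 ρ))
    (hz : RAP z) (a : ℝ) : RAP fun t => g t (z t) (z (t - a)) :=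
  RAP.comp_of_forall_closedBall (F := fun t (p : E × E) => g t p.1 p.2) hg
    (hz.prodMk (hz.comp_sub_const a))

variable [NormedSpace ℝ E] {A : ℝ → E →L[ℝ] E} {q : ℝ≥0}

/-- The part of `y' = f(t, y)` at `y = ξ + z` that is left once the linearisation `A(t) z` along
the solution `ξ` is split off. -/
def taylorRemainder (f : ℝ → E → E) (A : ℝ → E →L[ℝ] E) (ξ z : ℝ → E) (t : ℝ) : E :=
  f t (ξ t + z t) - f t (ξ t) - A t (z t)

/- `A t (z t)` is the uniform limit of the difference quotients of `f t` at `ξ t` along `z t`. -/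
theorem RAP.clm_apply_of_approximatesLinearOn (hf : ∀ ρ, RAPUniform f (closedBall 0 ρ))
    (hfA : ∀ q : ℝ≥0, 0 < q → ∃ r > 0, ∀ t,
      ApproximatesLinearOn (f t) (A t) (closedBall (ξ t) r) q)
    (hξ : RAP ξ) (hz : RAP z) : RAP fun t => A t (z t) := by
  obtain ⟨C, hC⟩ := hz.1
  have hC₀ : 0 ≤ C := (norm_nonneg _).trans (hC 0)
  refine .of_forall_exists_norm_sub_le fun ε hε => ?_
  obtain ⟨r, hr, happrox⟩ := hfA ⟨ε / (C + 1), by positivity⟩ (div_pos hε (by positivity))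
  obtain ⟨c, hc, hcr⟩ := exists_pos_mul_lt hr C
  refine ⟨fun t => c⁻¹ • (f t (ξ t + c • z t) - f t (ξ t)),
    .const_smul (.sub ((hξ.add (hz.const_smul c)).comp_of_forall_closedBall hf)
      (hξ.comp_of_forall_closedBall hf)) c⁻¹, fun t => ?_⟩
  have hcz : ‖c • z t‖ ≤ C * c := by
    rw [norm_smul, Real.norm_of_nonneg hc.le, mul_comm]
    exact mul_le_mul_of_nonneg_right (hC t) hc.le
  have hrem : ‖f t (ξ t + c • z t) - f t (ξ t) - A t (c • z t)‖ ≤ ε / (C + 1) * ‖c • z t‖ := by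
    simpa using! happrox t (ξ t + c • z t) (by simpa using hcz.trans hcr.le)
      (ξ t) (mem_closedBall_self hr.le)
  calc ‖A t (z t) - c⁻¹ • (f t (ξ t + c • z t) - f t (ξ t))‖
      = ‖c⁻¹ • (f t (ξ t + c • z t) - f t (ξ t) - A t (c • z t))‖ := by
        rw [norm_sub_rev, smul_sub _ _ (A t _), map_smul, inv_smul_smul₀ hc.ne']
    _ ≤ c⁻¹ * (ε / (C + 1) * (C * c)) := by
        rw [norm_smul, Real.norm_of_nonneg (inv_nonneg.2 hc.le)]
        gcongr
        exact hrem.trans (by gcongr)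
    _ = ε * (C / (C + 1)) := by field_simp
    _ ≤ ε := mul_le_of_le_one_right hε.le ((div_le_one₀ (by positivity)).2 (by linarith))

theorem rapLipschitzOnBall_taylorRemainder (hf : ∀ ρ, RAPUniform f (closedBall 0 ρ))
    (hfA : ∀ q : ℝ≥0, 0 < q → ∃ r > 0, ∀ t,
      ApproximatesLinearOn (f t) (A t) (closedBall (ξ t) r) q)
    (hξ : RAP ξ) (hq : ∀ t, ApproximatesLinearOn (f t) (A t) (closedBall (ξ t) r) q) :
    RAPLipschitzOnBall (taylorRemainder f A ξ) r q where
  rap hz := (((hξ.add hz.1).comp_of_forall_closedBall hf).sub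
    (hξ.comp_of_forall_closedBall hf)).sub (RAP.clm_apply_of_approximatesLinearOn hf hfA hξ hz.1)
  norm_sub_le {z w} hz hw B hB t := by
    have hmem {z : ℝ → E} (hz : z ∈ rapBall E r) : ξ t + z t ∈ closedBall (ξ t) r :=
      mem_closedBall_iff_norm.2 ((congrArg norm (add_sub_cancel_left _ _)).trans_le (hz.2 t))
    calc ‖taylorRemainder f A ξ z t - taylorRemainder f A ξ w t‖
        = ‖f t (ξ t + z t) - f t (ξ t + w t) - A t (ξ t + z t - (ξ t + w t))‖ := by
          simp only [taylorRemainder, add_sub_add_left_eq_sub, map_sub]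
          congr 1
          abel
      _ ≤ q * ‖ξ t + z t - (ξ t + w t)‖ := hq t _ (hmem hz) _ (hmem hw)
      _ ≤ q * B := by
          rw [add_sub_add_left_eq_sub]
          exact mul_le_mul_of_nonneg_left (hB t) q.2

theorem rapLipschitzOnBall_delay {ρ m : ℝ}
    (hg : ∀ ρ, RAPUniform (fun t (p : E × E) => g t p.1 p.2) (closedBall 0 ρ)) (hξ : RAP ξ)
    (hξr : ∀ t, ‖ξ t‖ + r ≤ ρ) (hm : 0 ≤ m)
    (hgm : ∀ t x y z v, ‖x‖ ≤ ρ → ‖y‖ ≤ ρ → ‖z‖ ≤ ρ → ‖v‖ ≤ ρ →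
      ‖g t x y - g t z v‖ ≤ m * (‖x - z‖ + ‖y - v‖)) :
    RAPLipschitzOnBall (fun z t => g t (ξ t + z t) (ξ (t - a) + z (t - a))) r (2 * m) where
  rap hz := RAP.comp_delay hg (hξ.add hz.1) a
  norm_sub_le {z w} hz hw B hB t := by
    have hbound {z : ℝ → E} (hz : z ∈ rapBall E r) (t : ℝ) : ‖ξ t + z t‖ ≤ ρ :=
      (norm_add_le_of_le le_rfl (hz.2 t)).trans (hξr t)
    refine (hgm t _ _ _ _ (hbound hz t) (hbound hz (t - a)) (hbound hw t)
      (hbound hw (t - a))).trans ?_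
    rw [add_sub_add_left_eq_sub, add_sub_add_left_eq_sub, mul_comm 2 m, mul_assoc, two_mul]
    exact mul_le_mul_of_nonneg_left (add_le_add (hB t) (hB (t - a))) hm

end Perturbation

section DelayedEquation

open scoped NNReal

variable {E : Type*} [NormedAddCommGroup E] [NormedSpace ℝ E]
  {f : ℝ → E → E} {A : ℝ → E →L[ℝ] E} {ξ : ℝ → E} {U : ℝ → (E →L[ℝ] E)ˣ} {P : E →L[ℝ] E}
  {α K a : ℝ} {g : ℝ → E → E → E}

/-- The nonlinearity `N` in the equation `z'(t) = A(t) z(t) + N(z)(t)` for the deviation `z = y - ξ`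
of a solution of `y'(t) = f(t, y(t)) + ν g(t, y(t), y(t - a))` from the solution `ξ` of the
unperturbed equation. -/
def deviationTerm (f : ℝ → E → E) (A : ℝ → E →L[ℝ] E) (ξ : ℝ → E) (a : ℝ) (g : ℝ → E → E → E)
    (ν : ℝ) (z : ℝ → E) (t : ℝ) : E :=
  taylorRemainder f A ξ z t + ν • g t (ξ t + z t) (ξ (t - a) + z (t - a))

theorem deviationTerm_zero (ν t : ℝ) :
    deviationTerm f A ξ a g ν 0 t = ν • g t (ξ t) (ξ (t - a)) := by
  simp only [deviationTerm, taylorRemainder, Pi.zero_apply, add_zero, sub_self, map_zero, zero_add]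

theorem hasDerivAt_deviation_iff (hξsol : ∀ t, HasDerivAt ξ (f t (ξ t)) t) {ν : ℝ} {ψ : ℝ → E}
    {t : ℝ} :
    HasDerivAt (fun t => ψ t - ξ t) (A t (ψ t - ξ t) +
      deviationTerm f A ξ a g ν (fun t => ψ t - ξ t) t) t ↔
      HasDerivAt ψ (f t (ψ t) + ν • g t (ψ t) (ψ (t - a))) t := by
  have hrhs : A t (ψ t - ξ t) + deviationTerm f A ξ a g ν (fun t => ψ t - ξ t) t =
      f t (ψ t) + ν • g t (ψ t) (ψ (t - a)) - f t (ξ t) := by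
    simp only [deviationTerm, taylorRemainder, add_sub_cancel]
    abel
  rw [hrhs]
  refine ⟨fun h => ?_, fun h => h.sub (hξsol t)⟩
  simpa only [Pi.add_def, sub_add_cancel] using h.add (hξsol t)

theorem rapLipschitzOnBall_deviationTerm {q : ℝ≥0} {r ρ m : ℝ}
    (hf : ∀ ρ, RAPUniform f (closedBall 0 ρ))
    (hfA : ∀ q : ℝ≥0, 0 < q → ∃ r > 0, ∀ t,
      ApproximatesLinearOn (f t) (A t) (closedBall (ξ t) r) q)
    (hξ : RAP ξ) (hq : ∀ t, ApproximatesLinearOn (f t) (A t) (closedBall (ξ t) r) q)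
    (hg : ∀ ρ, RAPUniform (fun t (p : E × E) => g t p.1 p.2) (closedBall 0 ρ))
    (hξr : ∀ t, ‖ξ t‖ + r ≤ ρ) (hm : 0 ≤ m)
    (hgm : ∀ t x y z v, ‖x‖ ≤ ρ → ‖y‖ ≤ ρ → ‖z‖ ≤ ρ → ‖v‖ ≤ ρ →
      ‖g t x y - g t z v‖ ≤ m * (‖x - z‖ + ‖y - v‖)) (ν : ℝ) :
    RAPLipschitzOnBall (deviationTerm f A ξ a g ν) r (q + |ν| * (2 * m)) :=
  (rapLipschitzOnBall_taylorRemainder hf hfA hξ hq).add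
    ((rapLipschitzOnBall_delay hg hξ hξr hm hgm).const_smul ν)

variable [CompleteSpace E]

theorem exists_rap_deviation (a : ℝ) (hf : ∀ ρ, RAPUniform f (closedBall 0 ρ))
    (hfA : ∀ q : ℝ≥0, 0 < q → ∃ r > 0, ∀ t,
      ApproximatesLinearOn (f t) (A t) (closedBall (ξ t) r) q)
    (hξ : RAP ξ) (H : OperatorExpDichotomy A U P α K)
    (hG : ∀ h : ℝ → E, RAP h → RAP (greenIntegral U P h))
    (hg : ∀ ρ, RAPUniform (fun t (p : E × E) => g t p.1 p.2) (closedBall 0 ρ))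
    (hgLip : ∀ ρ > 0, ∃ M, ∀ t x y z v, ‖x‖ ≤ ρ → ‖y‖ ≤ ρ → ‖z‖ ≤ ρ → ‖v‖ ≤ ρ →
      ‖g t x y - g t z v‖ ≤ M * (‖x - z‖ + ‖y - v‖)) :
    ∃ r > 0, ∃ ν₀ > 0, ∃ κ, ∀ ν ∈ Set.Icc (0 : ℝ) ν₀, ∃ z ∈ rapBall E r,
      (∀ t, HasDerivAt z (A t (z t) + deviationTerm f A ξ a g ν z t) t) ∧
      (∀ t, ‖z t‖ ≤ κ * ν) ∧
      ∀ w ∈ rapBall E r, (∀ t, HasDerivAt w (A t (w t) + deviationTerm f A ξ a g ν w t) t) →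
        w = z := by
  have hΛ := H.two_mul_div_rate_nonneg
  set Λ := 2 * K / α
  obtain ⟨q, hq, hΛq⟩ := exists_pos_mul_lt (show (0 : ℝ) < 1 / 4 by norm_num) Λ
  lift q to ℝ≥0 using hq.le
  obtain ⟨r, hr, hfr⟩ := hfA q hq
  obtain ⟨C, hC⟩ := hξ.1
  have hC₀ : 0 ≤ C := (norm_nonneg _).trans (hC 0)
  obtain ⟨M, hM⟩ := hgLip (C + r) (by positivity)
  obtain ⟨D, hD⟩ := (RAP.comp_delay hg hξ a).1
  have hD₀ : 0 ≤ D := (norm_nonneg _).trans (hD 0)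
  obtain ⟨ν₀, hν₀, hsmall⟩ :=
    exists_pos_mul_lt (show 0 < min (1 / 8) (r / 2) by positivity) (Λ * |M| + Λ * D)
  obtain ⟨hsmall₁, hsmall₂⟩ := lt_min_iff.1 hsmall
  rw [add_mul] at hsmall₁ hsmall₂
  have hΛM : 0 ≤ Λ * |M| * ν₀ := by positivity
  have hΛD : 0 ≤ Λ * D * ν₀ := by positivity
  have hL : Λ * (q + ν₀ * (2 * |M|)) < 1 / 2 := by linarith
  refine ⟨r, hr, ν₀, hν₀, Λ * D / (1 - Λ * (q + ν₀ * (2 * |M|))), fun ν hν => ?_⟩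
  have hN : RAPLipschitzOnBall (deviationTerm f A ξ a g ν) r (q + ν₀ * (2 * |M|)) := by
    refine (rapLipschitzOnBall_deviationTerm hf hfA hξ hfr hg (fun t => add_le_add_left (hC t) r)
      (abs_nonneg M) (fun t x y z v hx hy hz hv => (hM t x y z v hx hy hz hv).trans ?_) ν).mono ?_
    · gcongr
      exact le_abs_self M
    · rw [abs_of_nonneg hν.1]
      gcongr
      exact hν.2
  have hN0 (t : ℝ) : ‖deviationTerm f A ξ a g ν 0 t‖ ≤ D * ν := by
    rw [deviationTerm_zero, norm_smul, Real.norm_of_nonneg hν.1, mul_comm D]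
    exact mul_le_mul_of_nonneg_left (hD t) hν.1
  have hball : Λ * (q + ν₀ * (2 * |M|)) * r + Λ * (D * ν) ≤ r := by
    have hΛDν : Λ * D * ν ≤ Λ * D * ν₀ := by
      gcongr
      exact hν.2
    nlinarith
  obtain ⟨z, hz, hsol, hbound, huniq⟩ := H.exists_rap_solution hG hN hN0 (by positivity)
    (hL.trans one_half_lt_one) hball
  exact ⟨z, hz, hsol, fun t => (hbound t).trans_eq (by ring), huniq⟩

theorem exists_unique_RAP_solution_delayed_nonlinear_general (a : ℝ)
    (hf : ∀ ρ, RAPUniform f (closedBall 0 ρ))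
    (hfA : ∀ q : ℝ≥0, 0 < q → ∃ r > 0, ∀ t,
      ApproximatesLinearOn (f t) (A t) (closedBall (ξ t) r) q)
    (hξ : RAP ξ) (hξsol : ∀ t, HasDerivAt ξ (f t (ξ t)) t) (H : OperatorExpDichotomy A U P α K)
    (hG : ∀ h : ℝ → E, RAP h → RAP (greenIntegral U P h))
    (hg : ∀ ρ, RAPUniform (fun t (p : E × E) => g t p.1 p.2) (closedBall 0 ρ))
    (hgLip : ∀ ρ > 0, ∃ M, ∀ t x y z v, ‖x‖ ≤ ρ → ‖y‖ ≤ ρ → ‖z‖ ≤ ρ → ‖v‖ ≤ ρ →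
      ‖g t x y - g t z v‖ ≤ M * (‖x - z‖ + ‖y - v‖)) :
    ∃ r > 0, ∃ ν₀ > 0,
      (∀ ν ∈ Set.Icc (0 : ℝ) ν₀, ∃! ψ : ℝ → E,
        RAP ψ ∧ (∀ t, HasDerivAt ψ (f t (ψ t) + ν • g t (ψ t) (ψ (t - a))) t) ∧
          ∀ t, ‖ψ t - ξ t‖ ≤ r) ∧
      (∀ ψ : ℝ → ℝ → E,
        (∀ ν ∈ Set.Icc (0 : ℝ) ν₀, RAP (ψ ν) ∧
          (∀ t, HasDerivAt (ψ ν) (f t (ψ ν t) + ν • g t (ψ ν t) (ψ ν (t - a))) t) ∧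
          ∀ t, ‖ψ ν t - ξ t‖ ≤ r) →
        ∀ t, Tendsto (fun ν => ψ ν t) (nhdsWithin 0 (Set.Ioc 0 ν₀)) (nhds (ξ t))) := by
  obtain ⟨r, hr, ν₀, hν₀, κ, hdev⟩ := exists_rap_deviation a hf hfA hξ H hG hg hgLip
  refine ⟨r, hr, ν₀, hν₀, fun ν hν => ?_, fun ψ hψ t => ?_⟩
  · obtain ⟨z, hz, hzsol, -, huniq⟩ := hdev ν hν
    have hzψ : z = fun t => (z t + ξ t) - ξ t := by simp only [add_sub_cancel_right]
    refine ⟨fun t => z t + ξ t, ⟨hz.1.add hξ, fun t => ?_, fun t => ?_⟩, ?_⟩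
    · exact (hasDerivAt_deviation_iff hξsol).1 (hzψ ▸ hzsol t)
    · simpa only [add_sub_cancel_right] using hz.2 t
    · rintro ψ ⟨hψ, hψsol, hψr⟩
      rw [← huniq _ ⟨hψ.sub hξ, hψr⟩ fun t => (hasDerivAt_deviation_iff hξsol).2 (hψsol t)]
      simp only [sub_add_cancel]
  · refine tendsto_iff_norm_sub_tendsto_zero.2 (squeeze_zero' (.of_forall fun _ => norm_nonneg _)
      (g := fun ν => κ * ν) ?_ ?_)
    · filter_upwards [self_mem_nhdsWithin] with ν hν
      have hν' := Set.Ioc_subset_Icc_self hν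
      obtain ⟨hψR, hψsol, hψr⟩ := hψ ν hν'
      obtain ⟨z, -, -, hzκ, huniq⟩ := hdev ν hν'
      have hψz := huniq _ ⟨hψR.sub hξ, hψr⟩ fun t => (hasDerivAt_deviation_iff hξsol).2 (hψsol t)
      exact (congrArg norm (congrFun hψz t)).trans_le (hzκ t)
    · exact ((continuous_const_mul κ).tendsto' 0 0 (mul_zero κ)).mono_left nhdsWithin_le_nhds

end DelayedEquation

section SecondDerivative

open scoped NNReal

variable {E F : Type*} [NormedAddCommGroup E] [NormedSpace ℝ E] [NormedAddCommGroup F]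
  [NormedSpace ℝ F]

theorem differentiable_fderiv_of_contDiff_two {f : E → F} (hf : ContDiff ℝ 2 f) :
    Differentiable ℝ (fderiv ℝ f) :=
  (hf.fderiv_right (m := 1) (by norm_num)).differentiable one_ne_zero

theorem norm_second_difference_sub_le {f : E → F} (hf : ContDiff ℝ 2 f) {x : E} {D : ℝ}
    (hD : ∀ y ∈ closedBall x 2, ‖fderiv ℝ (fderiv ℝ f) y - fderiv ℝ (fderiv ℝ f) x‖ ≤ D)
    {u v : E} (hu : ‖u‖ ≤ 1) (hv : ‖v‖ ≤ 1) :
    ‖f (x + u + v) - f (x + u) - (f (x + v) - f x) - fderiv ℝ (fderiv ℝ f) x v u‖ ≤ D := by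
  have hD₀ : 0 ≤ D :=
    (ContinuousLinearMap.opNorm_nonneg _).trans (hD x (mem_closedBall_self zero_le_two))
  have hdiff := hf.differentiable two_ne_zero
  have hderiv {y : E} (hy : y ∈ closedBall x 1) :
      ‖fderiv ℝ f (y + v) - fderiv ℝ f y - fderiv ℝ (fderiv ℝ f) x v‖ ≤ D := by
    have hyx := mem_closedBall_iff_norm.1 hy
    have hyv : y + v ∈ closedBall x 2 := by
      rw [mem_closedBall_iff_norm, add_sub_right_comm]
      exact (norm_add_le_of_le hyx hv).trans_eq one_add_one_eq_two
    have hle := (convex_closedBall x 2).norm_image_sub_le_of_norm_fderiv_le' (𝕜 := ℝ)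
      (fun y _ => differentiable_fderiv_of_contDiff_two hf y) hD
      (closedBall_subset_closedBall one_le_two hy) hyv
    rw [add_sub_cancel_left] at hle
    exact hle.trans (mul_le_of_le_one_right hD₀ hv)
  have hle := (convex_closedBall x 1).norm_image_sub_le_of_norm_hasFDerivWithin_le' (𝕜 := ℝ)
    (f := fun y => f (y + v) - f y) (φ := fderiv ℝ (fderiv ℝ f) x v)
    (fun y _ => (((hasFDerivAt_comp_add_right v).2 (hdiff (y + v)).hasFDerivAt).sub
      (hdiff y).hasFDerivAt).hasFDerivWithinAt) (fun y hy => hderiv hy)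
    (mem_closedBall_self zero_le_one) (show x + u ∈ closedBall x 1 by simpa using hu)
  rw [add_sub_cancel_left] at hle
  exact hle.trans (mul_le_of_le_one_right hD₀ hu)

theorem norm_fderiv_fderiv_le {f : E → F} (hf : ContDiff ℝ 2 f) {x : E} {C D : ℝ}
    (hC : ∀ y ∈ closedBall x 2, ‖f y‖ ≤ C)
    (hD : ∀ y ∈ closedBall x 2, ‖fderiv ℝ (fderiv ℝ f) y - fderiv ℝ (fderiv ℝ f) x‖ ≤ D) :
    ‖fderiv ℝ (fderiv ℝ f) x‖ ≤ 4 * C + D := by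
  have hx := mem_closedBall_self (x := x) zero_le_two
  have hC₀ : 0 ≤ C := (norm_nonneg _).trans (hC x hx)
  have hD₀ : 0 ≤ D := (ContinuousLinearMap.opNorm_nonneg _).trans (hD x hx)
  have hf_le {w : E} (hw : ‖w‖ ≤ 2) : ‖f (x + w)‖ ≤ C := hC _ (by simpa using hw)
  refine ContinuousLinearMap.opNorm_le_of_unit_norm (by positivity) fun v hv =>
    ContinuousLinearMap.opNorm_le_of_unit_norm (by positivity) fun u hu => ?_
  have huv : ‖f (x + u + v)‖ ≤ C := by
    rw [add_assoc]
    exact hf_le ((norm_add_le u v).trans (by linarith))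
  have hdiff : ‖f (x + u + v) - f (x + u) - (f (x + v) - f x)‖ ≤ C + C + (C + C) :=
    norm_sub_le_of_le (norm_sub_le_of_le huv (hf_le (by linarith)))
      (norm_sub_le_of_le (hf_le (by linarith)) (hC x hx))
  have hsub := norm_second_difference_sub_le hf hD hu.le hv.le
  calc ‖fderiv ℝ (fderiv ℝ f) x v u‖
      ≤ ‖f (x + u + v) - f (x + u) - (f (x + v) - f x)‖ +
        ‖f (x + u + v) - f (x + u) - (f (x + v) - f x) - fderiv ℝ (fderiv ℝ f) x v u‖ :=
        norm_le_norm_add_norm_sub _ _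
    _ ≤ 4 * C + D := by linarith

/- A uniform bound on `f t` and a uniform modulus of continuity of its second derivative bound that
derivative itself uniformly, which makes the first derivatives uniformly Lipschitz on balls. -/
theorem exists_approximatesLinearOn_closedBall {ι : Type*} {f : ι → E → F} {ξ : ι → E}
    (hf : ∀ t, ContDiff ℝ 2 (f t)) (hfb : ∀ ρ, ∃ C, ∀ t, ∀ x ∈ closedBall 0 ρ, ‖f t x‖ ≤ C)
    (hf2 : ∀ ρ > 0, ∃ L, ∀ t x y, ‖x‖ ≤ ρ → ‖y‖ ≤ ρ →
      ‖fderiv ℝ (fderiv ℝ (f t)) x - fderiv ℝ (fderiv ℝ (f t)) y‖ ≤ L * ‖x - y‖)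
    (hξ : ∃ C, ∀ t, ‖ξ t‖ ≤ C) {q : ℝ≥0} (hq : 0 < q) :
    ∃ r > 0, ∀ t, ApproximatesLinearOn (f t) (fderiv ℝ (f t) (ξ t)) (closedBall (ξ t) r) q := by
  obtain ⟨R, hR⟩ := hξ
  obtain ⟨C, hC⟩ := hfb (|R| + 3)
  obtain ⟨L, hL⟩ := hf2 (|R| + 3) (by positivity)
  have hξball {t : ι} {y : E} {s : ℝ} (hy : y ∈ closedBall (ξ t) s) : ‖y‖ ≤ |R| + s :=
    (norm_le_of_mem_closedBall hy).trans (by linarith [hR t, le_abs_self R])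
  have hsecond {t : ι} {x : E} (hx : x ∈ closedBall (ξ t) 1) :
      ‖fderiv ℝ (fderiv ℝ (f t)) x‖ ≤ 4 * C + |L| * 2 := by
    have hball {y : E} (hy : y ∈ closedBall x 2) : ‖y‖ ≤ |R| + 3 :=
      (norm_le_of_mem_closedBall hy).trans (by linarith [hξball hx])
    refine norm_fderiv_fderiv_le (hf t)
      (fun y hy => hC t y (mem_closedBall_zero_iff.2 (hball hy))) fun y hy => ?_
    refine (hL t y x (hball hy) (hball (mem_closedBall_self zero_le_two))).trans ?_
    exact mul_le_mul (le_abs_self L) (mem_closedBall_iff_norm.1 hy) (norm_nonneg _) (abs_nonneg L)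
  obtain ⟨s, hs, hsq⟩ := exists_pos_mul_lt (NNReal.coe_pos.2 hq) (4 * C + |L| * 2)
  refine ⟨min s 1, by positivity, fun t x hx y hy => ?_⟩
  refine (convex_closedBall (ξ t) (min s 1)).norm_image_sub_le_of_norm_fderiv_le' (𝕜 := ℝ)
    (fun z _ => (hf t).differentiable two_ne_zero z) (fun z hz => ?_) hy hx
  have hsub := closedBall_subset_closedBall (x := ξ t) (min_le_right s 1)
  have hB := (ContinuousLinearMap.opNorm_nonneg _).trans (hsecond (hsub hz))
  calc ‖fderiv ℝ (f t) z - fderiv ℝ (f t) (ξ t)‖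
      ≤ (4 * C + |L| * 2) * ‖z - ξ t‖ :=
        (convex_closedBall (ξ t) 1).norm_image_sub_le_of_norm_fderiv_le (𝕜 := ℝ)
          (fun z _ => differentiable_fderiv_of_contDiff_two (hf t) z) (fun z hz => hsecond hz)
          (mem_closedBall_self zero_le_one) (hsub hz)
    _ ≤ (4 * C + |L| * 2) * s := by
        gcongr
        exact (mem_closedBall_iff_norm.1 hz).trans (min_le_left s 1)
    _ ≤ q := hsq.le

end SecondDerivative

section Matrices

variable {n : ℕ} {A : ℝ → EuclideanSpace ℝ (Fin n) →L[ℝ] EuclideanSpace ℝ (Fin n)}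
  {Φ : ℝ → Matrix (Fin n) (Fin n) ℝ} {P : Matrix (Fin n) (Fin n) ℝ} {α K : ℝ}

theorem toEuclideanCLM_clmToMatrix
    (L : EuclideanSpace ℝ (Fin n) →L[ℝ] EuclideanSpace ℝ (Fin n)) :
    Matrix.toEuclideanCLM (𝕜 := ℝ) (clmToMatrix L) = L :=
  ContinuousLinearMap.coe_injective (Matrix.toEuclideanLin.apply_symm_apply _)

theorem hasDerivAt_toEuclideanCLM {Φ' : Matrix (Fin n) (Fin n) ℝ} {t : ℝ}
    (h : ∀ i j, HasDerivAt (fun s => Φ s i j) (Φ' i j) t) :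
    HasDerivAt (fun s => Matrix.toEuclideanCLM (𝕜 := ℝ) (Φ s))
      (Matrix.toEuclideanCLM (𝕜 := ℝ) Φ') t := by
  have hsum (B : Matrix (Fin n) (Fin n) ℝ) : Matrix.toEuclideanCLM (𝕜 := ℝ) B =
      ∑ i, ∑ j, B i j • Matrix.toEuclideanCLM (𝕜 := ℝ) (Matrix.single i j (1 : ℝ)) := by
    conv_lhs => rw [Matrix.matrix_eq_sum_single B]
    simp only [map_sum, ← map_smul, Matrix.smul_single, smul_eq_mul, mul_one]
  rw [funext fun s => hsum (Φ s), hsum Φ']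
  exact .fun_sum fun i _ => .fun_sum fun j _ =>
    HasDerivAt.smul_const (F := EuclideanSpace ℝ (Fin n) →L[ℝ] EuclideanSpace ℝ (Fin n)) (h i j) _

/-- The values of a pointwise invertible matrix function as invertible operators. -/
noncomputable def unitsOfMatrix (hΦ : ∀ t, IsUnit (Φ t)) (t : ℝ) :
    (EuclideanSpace ℝ (Fin n) →L[ℝ] EuclideanSpace ℝ (Fin n))ˣ :=
  Units.map (Matrix.toEuclideanCLM (n := Fin n) (𝕜 := ℝ)) (hΦ t).unit

theorem coe_unitsOfMatrix (hΦ : ∀ t, IsUnit (Φ t)) (t : ℝ) :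
    (unitsOfMatrix hΦ t : EuclideanSpace ℝ (Fin n) →L[ℝ] EuclideanSpace ℝ (Fin n)) =
      Matrix.toEuclideanCLM (𝕜 := ℝ) (Φ t) := rfl

theorem coe_unitsOfMatrix_inv (hΦ : ∀ t, IsUnit (Φ t)) (t : ℝ) :
    (↑(unitsOfMatrix hΦ t)⁻¹ : EuclideanSpace ℝ (Fin n) →L[ℝ] EuclideanSpace ℝ (Fin n)) =
      Matrix.toEuclideanCLM (𝕜 := ℝ) (Φ t)⁻¹ := by
  rw [unitsOfMatrix, ← map_inv, Units.coe_map, Matrix.coe_units_inv]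
  rfl

theorem toEuclideanCLM_greenKernel (hΦ : ∀ t, IsUnit (Φ t)) (t s : ℝ) :
    Matrix.toEuclideanCLM (𝕜 := ℝ) (GreenKernel Φ P t s) =
      greenOperator (unitsOfMatrix hΦ) (Matrix.toEuclideanCLM (𝕜 := ℝ) P) t s := by
  simp only [GreenKernel, greenOperator, coe_unitsOfMatrix, coe_unitsOfMatrix_inv]
  split_ifs
  · simp only [map_mul]
  · simp only [map_neg, map_mul, map_sub, map_one]

theorem ExpDichotomy.toOperator (hα : 0 < α)
    (hΦ : IsFundamentalMatrix (fun t => clmToMatrix (A t)) Φ) (hdich : ExpDichotomy Φ α K P) :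
    OperatorExpDichotomy A (unitsOfMatrix hΦ.2.1) (Matrix.toEuclideanCLM (𝕜 := ℝ) P) α K where
  rate_pos := hα
  hasDerivAt t := by
    simpa only [coe_unitsOfMatrix, map_mul, toEuclideanCLM_clmToMatrix] using
      hasDerivAt_toEuclideanCLM (hΦ.2.2 t)
  norm_stable_le {t s} hst := by
    simpa only [coe_unitsOfMatrix, coe_unitsOfMatrix_inv, ← map_mul] using! hdich.2.1 t s hst
  norm_unstable_le {t s} hts := by
    simpa only [coe_unitsOfMatrix, coe_unitsOfMatrix_inv, ← map_mul, ← map_sub,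
      ← map_one (Matrix.toEuclideanCLM (n := Fin n) (𝕜 := ℝ))] using! hdich.2.2 t s hts

theorem RAPIntegralProperty.rap_greenIntegral (hG : RAPIntegralProperty (GreenKernel Φ P))
    (hΦ : ∀ t, IsUnit (Φ t)) {h : ℝ → EuclideanSpace ℝ (Fin n)} (hh : RAP h) :
    RAP (greenIntegral (unitsOfMatrix hΦ) (Matrix.toEuclideanCLM (𝕜 := ℝ) P) h) := by
  have hkernel : greenIntegral (unitsOfMatrix hΦ) (Matrix.toEuclideanCLM (𝕜 := ℝ) P) h =
      fun t => ∫ s, mulVecE (GreenKernel Φ P t s) (h s) := by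
    funext t
    simp only [greenIntegral, ← toEuclideanCLM_greenKernel hΦ]
    rfl
  exact hkernel ▸ hG h hh

end Matrices

/-- Theorem: RAP solutions of the nonlinear delayed system
`y'(t) = f(t,y(t)) + ν·g(t, y(t), y(t-a))` under (H1), (H2''), (H3), (H4'). -/
theorem exists_unique_RAP_solution_delayed_nonlinear {n : ℕ}
    (f : ℝ → EuclideanSpace ℝ (Fin n) → EuclideanSpace ℝ (Fin n))
    (ξ : ℝ → EuclideanSpace ℝ (Fin n))
    (Φ : ℝ → Matrix (Fin n) (Fin n) ℝ)
    (P : Matrix (Fin n) (Fin n) ℝ) (α K : ℝ)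
    (a : ℝ) (ha : 0 < a)
    (g : ℝ → EuclideanSpace ℝ (Fin n) → EuclideanSpace ℝ (Fin n) →
      EuclideanSpace ℝ (Fin n))
    (M₁ : ℝ → ℝ)
    (hα : 0 < α) (hK : 1 ≤ K)
    -- f : RAP in t uniformly on compacts, C² in x, second derivative locally
    -- Lipschitz uniformly in t
    (hfRAP : ∀ S : Set (EuclideanSpace ℝ (Fin n)), IsCompact S → RAPUniform f S)
    (hfC2 : ∀ t, ContDiff ℝ 2 (f t))
    (hf2lip : ∀ r > 0, ∃ L, ∀ t : ℝ, ∀ x y : EuclideanSpace ℝ (Fin n),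
      ‖x‖ ≤ r → ‖y‖ ≤ r →
      ‖fderiv ℝ (fderiv ℝ (f t)) x - fderiv ℝ (fderiv ℝ (f t)) y‖ ≤ L * ‖x - y‖)
    -- ξ : unique RAP solution of z' = f(t,z)
    (hξRAP : RAP ξ)
    (hξsol : ∀ t, HasDerivAt ξ (f t (ξ t)) t)
    (hξuniq : ∀ η : ℝ → EuclideanSpace ℝ (Fin n), RAP η →
      (∀ t, HasDerivAt η (f t (η t)) t) → η = ξ)
    -- (H2'') : the variational system along ξ
    (hVRAP : RAPMatrix (fun t => clmToMatrix (fderiv ℝ (f t) (ξ t))))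
    (hΦ : IsFundamentalMatrix (fun t => clmToMatrix (fderiv ℝ (f t) (ξ t))) Φ)
    (hdich : ExpDichotomy Φ α K P)
    (hGreen : RAPIntegralProperty (GreenKernel Φ P))
    -- (H4') : g bounded, RAP in t uniformly on bounded sets, uniformly continuous,
    -- and Lipschitz
    (hgbdd : ∃ C, ∀ t : ℝ, ∀ x y : EuclideanSpace ℝ (Fin n), ‖g t x y‖ ≤ C)
    (hgRAP : ∀ S : Set (EuclideanSpace ℝ (Fin n) × EuclideanSpace ℝ (Fin n)),
      Bornology.IsBounded S → RAPUniform (fun t p => g t p.1 p.2) S)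
    (hgUC : ∀ S : Set (EuclideanSpace ℝ (Fin n) × EuclideanSpace ℝ (Fin n)),
      Bornology.IsBounded S →
      UniformContinuousOn
        (fun p : ℝ × (EuclideanSpace ℝ (Fin n) × EuclideanSpace ℝ (Fin n)) =>
          g p.1 p.2.1 p.2.2) (Set.univ ×ˢ S))
    (hglip : ∀ r > 0, ∀ t : ℝ, ∀ x y z v : EuclideanSpace ℝ (Fin n),
      ‖x‖ ≤ r → ‖y‖ ≤ r → ‖z‖ ≤ r → ‖v‖ ≤ r →
      ‖g t x y - g t z v‖ ≤ M₁ r * (‖x - z‖ + ‖y - v‖)) :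
    ∃ r > 0, ∃ ν₀ > 0,
      (∀ ν ∈ Set.Icc (0:ℝ) ν₀,
        ∃! ψ : ℝ → EuclideanSpace ℝ (Fin n),
          RAP ψ ∧
          (∀ t, HasDerivAt ψ (f t (ψ t) + ν • g t (ψ t) (ψ (t - a))) t) ∧
          ∀ t, ‖ψ t - ξ t‖ ≤ r) ∧
      (∀ ψ : ℝ → ℝ → EuclideanSpace ℝ (Fin n),
        (∀ ν ∈ Set.Icc (0:ℝ) ν₀, RAP (ψ ν) ∧
          (∀ t, HasDerivAt (ψ ν) (f t (ψ ν t) + ν • g t (ψ ν t) (ψ ν (t - a))) t) ∧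
          ∀ t, ‖ψ ν t - ξ t‖ ≤ r) →
        ∀ t, Filter.Tendsto (fun ν => ψ ν t)
          (nhdsWithin 0 (Set.Ioc 0 ν₀)) (nhds (ξ t))) := by
  exact exists_unique_RAP_solution_delayed_nonlinear_general a
    (fun ρ => hfRAP _ (isCompact_closedBall 0 ρ))
    (fun q hq => exists_approximatesLinearOn_closedBall hfC2
      (fun ρ => (hfRAP _ (isCompact_closedBall 0 ρ)).1) hf2lip hξRAP.1 hq)
    hξRAP hξsol (hdich.toOperator hα hΦ) (fun _ => hGreen.rap_greenIntegral hΦ.2.1)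
    (fun ρ => hgRAP _ isBounded_closedBall) (fun ρ hρ => ⟨M₁ ρ, hglip ρ hρ⟩)
end

section
/- Let Ω ⊆ ℝⁿ and let f : ℝ × Ω → ℝ be continuous and bounded. For ν > 0 define F(t,x,ν) = ∫_{−∞}^{t} e^{−ν(t−s)} f(s,x) ds, h(u,x) = sup_{s∈ℝ} |(1/u) ∫₀^{u} f(s−r,x) dr| for u > 0, and ξ(x,ν) = ν² ∫₀^{∞} h(u,x)·u·e^{−νu} du. Then for all t ∈ ℝ, x ∈ Ω, and ν > 0, |F(t,x,ν)| ≤ ν⁻¹·ξ(x,ν). -/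
open MeasureTheory Filter Metric

/-- `Fexp f x ν t = ∫_{-∞}^t e^{-ν(t-s)} f(s,x) ds`. -/
noncomputable def Fexp {n : ℕ} (f : ℝ → EuclideanSpace ℝ (Fin n) → ℝ)
    (x : EuclideanSpace ℝ (Fin n)) (ν t : ℝ) : ℝ :=
  ∫ s in Set.Iic t, Real.exp (-ν * (t - s)) * f s x

/-- `hSup f x u = sup_{s ∈ ℝ} |(1/u) ∫₀ᵘ f(s-r,x) dr|`. -/
noncomputable def hSup {n : ℕ} (f : ℝ → EuclideanSpace ℝ (Fin n) → ℝ)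
    (x : EuclideanSpace ℝ (Fin n)) (u : ℝ) : ℝ :=
  ⨆ s : ℝ, |(1 / u) * ∫ r in (0:ℝ)..u, f (s - r) x|

/-- `xiBound f x ν = ν² ∫₀^∞ hSup(u,x)·u·e^{-νu} du`. -/
noncomputable def xiBound {n : ℕ} (f : ℝ → EuclideanSpace ℝ (Fin n) → ℝ)
    (x : EuclideanSpace ℝ (Fin n)) (ν : ℝ) : ℝ :=
  ν ^ 2 * ∫ u in Set.Ioi (0:ℝ), hSup f x u * u * Real.exp (-ν * u)

/-!
After the substitution `s = t - r`, `F(t, x, ν)` is the Laplace transform at `ν` of the backward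
function `r ↦ f(t - r, x)`. A Laplace transform is `ν` times the Laplace transform of the
primitive, and the primitive at `u` is `u` times the mean of `f(·, x)` over a window of length `u`,
hence at most `u * h(u, x)` in absolute value.
-/

section SlidingMean

open Set

variable {E : Type*} [NormedAddCommGroup E] [NormedSpace ℝ E] {g : ℝ → E} {C ν : ℝ}

/-- The supremum of the norms of the means of `g` over the intervals `[s - u, s]` of length `u`.
It extends `hSup` to vector-valued functions of time: `hSup f x` is
`slidingMeanSup fun s ↦ f s x`. Like every real `⨆`, it is `0` when those norms are unbounded. -/
noncomputable def slidingMeanSup (g : ℝ → E) (u : ℝ) : ℝ :=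
  ⨆ s : ℝ, ‖(1 / u) • ∫ r in (0 : ℝ)..u, g (s - r)‖

theorem norm_intervalIntegral_comp_sub_left_le (hC : ∀ᵐ s, ‖g s‖ ≤ C) (s u : ℝ) :
    ‖∫ r in (0 : ℝ)..u, g (s - r)‖ ≤ C * |u| := by
  have hC' : ∀ᵐ r, ‖g (s - r)‖ ≤ C :=
    (quasiMeasurePreserving_sub_left volume s).ae hC
  simpa using intervalIntegral.norm_integral_le_of_norm_le_const_ae
    (a := 0) (b := u) (hC'.mono fun _ hr _ ↦ hr)

theorem norm_slidingMean_le (hC : ∀ᵐ s, ‖g s‖ ≤ C) (s : ℝ) {u : ℝ} (hu : 0 < u) :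
    ‖(1 / u) • ∫ r in (0 : ℝ)..u, g (s - r)‖ ≤ C := by
  rw [norm_smul, Real.norm_of_nonneg (by positivity), one_div_mul_eq_div, div_le_iff₀ hu]
  simpa only [abs_of_pos hu] using norm_intervalIntegral_comp_sub_left_le hC s u

theorem bddAbove_range_norm_slidingMean (hC : ∀ᵐ s, ‖g s‖ ≤ C) {u : ℝ} (hu : 0 < u) :
    BddAbove (range fun s ↦ ‖(1 / u) • ∫ r in (0 : ℝ)..u, g (s - r)‖) :=
  ⟨C, forall_mem_range.2 fun s ↦ norm_slidingMean_le hC s hu⟩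

theorem slidingMeanSup_nonneg (g : ℝ → E) (u : ℝ) : 0 ≤ slidingMeanSup g u :=
  Real.iSup_nonneg fun _ ↦ norm_nonneg _

theorem slidingMeanSup_le (hC : ∀ᵐ s, ‖g s‖ ≤ C) {u : ℝ} (hu : 0 < u) :
    slidingMeanSup g u ≤ C :=
  ciSup_le fun s ↦ norm_slidingMean_le hC s hu

theorem norm_intervalIntegral_comp_sub_left_le_slidingMeanSup_mul {u : ℝ} (hu : 0 < u)
    (hbdd : BddAbove (range fun s ↦ ‖(1 / u) • ∫ r in (0 : ℝ)..u, g (s - r)‖)) (s : ℝ) :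
    ‖∫ r in (0 : ℝ)..u, g (s - r)‖ ≤ slidingMeanSup g u * u := by
  rw [← div_le_iff₀ hu]
  calc ‖∫ r in (0 : ℝ)..u, g (s - r)‖ / u
      = ‖(1 / u) • ∫ r in (0 : ℝ)..u, g (s - r)‖ := by
        rw [norm_smul, Real.norm_of_nonneg (by positivity), one_div_mul_eq_div]
    _ ≤ slidingMeanSup g u := le_ciSup hbdd s

theorem measurable_slidingMeanSup (hg : LocallyIntegrable g)
    (hbdd : ∀ u, BddAbove (range fun s ↦ ‖∫ r in (0 : ℝ)..u, g (s - r)‖)) :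
    Measurable (slidingMeanSup g) := by
  have hcont (s : ℝ) : Continuous fun u ↦ ‖∫ r in (0 : ℝ)..u, g (s - r)‖ := by
    refine (intervalIntegral.continuous_primitive (fun a b ↦ ?_) 0).norm
    have hab : IntervalIntegrable g volume (s - a) (s - b) :=
      (hg.integrableOn_isCompact isCompact_uIcc).intervalIntegrable
    simpa only [sub_sub_cancel] using hab.comp_sub_left s
  have hsup : Measurable fun u ↦ ⨆ s, ‖∫ r in (0 : ℝ)..u, g (s - r)‖ :=
    (lowerSemicontinuous_ciSup hbdd fun s ↦ (hcont s).lowerSemicontinuous).measurable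
  have hfactor : slidingMeanSup g =
      fun u ↦ ‖1 / u‖ * ⨆ s, ‖∫ r in (0 : ℝ)..u, g (s - r)‖ := by
    funext u
    simp only [slidingMeanSup, norm_smul, Real.mul_iSup_of_nonneg (norm_nonneg _)]
  rw [hfactor]
  fun_prop

theorem integrableOn_slidingMeanSup_mul_exp (hg : AEStronglyMeasurable g)
    (hC : ∀ᵐ s, ‖g s‖ ≤ C) (hν : 0 < ν) :
    IntegrableOn (fun u ↦ slidingMeanSup g u * u * Real.exp (-ν * u)) (Ioi 0) := by
  have hmeas : Measurable (slidingMeanSup g) :=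
    measurable_slidingMeanSup ((memLp_top_of_bound hg C hC).locallyIntegrable le_top) fun u ↦
      ⟨C * |u|, forall_mem_range.2 fun s ↦ norm_intervalIntegral_comp_sub_left_le hC s u⟩
  have hdom : IntegrableOn (fun u : ℝ ↦ u * Real.exp (-ν * u)) (Ioi 0) := by
    simpa using integrableOn_rpow_mul_exp_neg_mul_rpow (p := 1) (s := 1) (by simp) one_pos hν
  simp only [mul_assoc]
  refine hdom.bdd_mul (c := C) hmeas.aestronglyMeasurable ?_
  filter_upwards [ae_restrict_mem measurableSet_Ioi] with u hu
  rw [Real.norm_of_nonneg (slidingMeanSup_nonneg g u)]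
  exact slidingMeanSup_le hC hu

theorem integrableOn_exp_smul_comp_sub_left (hg : AEStronglyMeasurable g)
    (hC : ∀ᵐ s, ‖g s‖ ≤ C) (hν : 0 < ν) (t : ℝ) :
    IntegrableOn (fun r ↦ Real.exp (-ν * r) • g (t - r)) (Ioi 0) := by
  have hqmp := quasiMeasurePreserving_sub_left (volume : Measure ℝ) t
  exact (exp_neg_integrableOn_Ioi 0 hν).smul_bdd C
    (hg.comp_quasiMeasurePreserving hqmp).restrict (ae_restrict_of_ae (hqmp.ae hC))

theorem setIntegral_Iic_eq_setIntegral_Ioi_comp_sub_left (φ : ℝ → E) (t : ℝ) :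
    ∫ s in Iic t, φ s = ∫ r in Ioi 0, φ (t - r) := by
  have h := (Measure.measurePreserving_sub_left volume t).setIntegral_preimage_emb
    (Homeomorph.subLeft t).measurableEmbedding φ (Iic t)
  rw [← h, preimage_const_sub_Iic, sub_self, integral_Ici_eq_integral_Ioi]

variable [CompleteSpace E]

theorem integral_exp_smul_eq_smul_integral_exp_smul_primitive (hν : 0 < ν)
    (hg : IntegrableOn (fun r ↦ Real.exp (-ν * r) • g r) (Ioi 0)) :
    ∫ r in Ioi 0, Real.exp (-ν * r) • g r =
      ν • ∫ u in Ioi 0, Real.exp (-ν * u) • ∫ r in (0 : ℝ)..u, g r := by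
  -- The weighted primitive is the convolution of `r ↦ exp (-ν * r) • g r` with `exp (-ν * ·)`,
  -- so its integral is the product of theirs.
  have hconv (u : ℝ) : Real.exp (-ν * u) • ∫ r in (0 : ℝ)..u, g r =
      ∫ r in (0 : ℝ)..u, Real.exp (-ν * (u - r)) • Real.exp (-ν * r) • g r := by
    simp only [smul_smul, ← Real.exp_add, ← mul_add, sub_add_cancel,
      intervalIntegral.integral_smul]
  have hexp : ∫ u in Ioi 0, Real.exp (-ν * u) = ν⁻¹ := by
    simpa using integral_exp_mul_Ioi (neg_neg_of_pos hν) 0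
  have hfubini := integral_posConvolution hg (exp_neg_integrableOn_Ioi 0 hν)
    (ContinuousLinearMap.lsmul ℝ ℝ).flip
  simp only [ContinuousLinearMap.flip_apply, ContinuousLinearMap.lsmul_apply, hexp] at hfubini
  simp only [hconv, hfubini, smul_inv_smul₀ hν.ne']

theorem norm_integral_exp_smul_comp_sub_left_le (hν : 0 < ν) (t : ℝ)
    (hg : IntegrableOn (fun r ↦ Real.exp (-ν * r) • g (t - r)) (Ioi 0))
    (hbdd : ∀ u, 0 < u → BddAbove (range fun s ↦ ‖(1 / u) • ∫ r in (0 : ℝ)..u, g (s - r)‖))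
    (hint : IntegrableOn (fun u ↦ slidingMeanSup g u * u * Real.exp (-ν * u)) (Ioi 0)) :
    ‖∫ r in Ioi 0, Real.exp (-ν * r) • g (t - r)‖ ≤
      ν * ∫ u in Ioi 0, slidingMeanSup g u * u * Real.exp (-ν * u) := by
  rw [integral_exp_smul_eq_smul_integral_exp_smul_primitive hν hg, norm_smul,
    Real.norm_of_nonneg hν.le]
  gcongr
  refine norm_integral_le_of_norm_le hint ?_
  filter_upwards [ae_restrict_mem measurableSet_Ioi] with u hu
  rw [norm_smul, Real.norm_of_nonneg (Real.exp_pos _).le, mul_comm]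
  gcongr
  exact norm_intervalIntegral_comp_sub_left_le_slidingMeanSup_mul hu (hbdd u hu) t

theorem abs_Fexp_le_general (hg : AEStronglyMeasurable g) (hC : ∀ᵐ s, ‖g s‖ ≤ C)
    (hν : 0 < ν) (t : ℝ) :
    ‖∫ s in Iic t, Real.exp (-ν * (t - s)) • g s‖ ≤
      ν * ∫ u in Ioi 0, slidingMeanSup g u * u * Real.exp (-ν * u) := by
  simpa only [setIntegral_Iic_eq_setIntegral_Ioi_comp_sub_left, sub_sub_cancel] using
    norm_integral_exp_smul_comp_sub_left_le hν t (integrableOn_exp_smul_comp_sub_left hg hC hν t)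
      (fun _ hu ↦ bddAbove_range_norm_slidingMean hC hu)
      (integrableOn_slidingMeanSup_mul_exp hg hC hν)

end SlidingMean

/-- Lemma 3.3(1): `|F(t,x,ν)| ≤ ν⁻¹ ξ(x,ν)`. -/
theorem abs_Fexp_le {n : ℕ} (Ω : Set (EuclideanSpace ℝ (Fin n)))
    (f : ℝ → EuclideanSpace ℝ (Fin n) → ℝ)
    (hfc : ContinuousOn (fun p : ℝ × EuclideanSpace ℝ (Fin n) => f p.1 p.2)
      (Set.univ ×ˢ Ω))
    (hfb : ∃ C, ∀ t : ℝ, ∀ x ∈ Ω, |f t x| ≤ C)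
    (t : ℝ) (x : EuclideanSpace ℝ (Fin n)) (hx : x ∈ Ω) (ν : ℝ) (hν : 0 < ν) :
    |Fexp f x ν t| ≤ ν⁻¹ * xiBound f x ν := by
  obtain ⟨C, hC⟩ := hfb
  have hc : Continuous fun s ↦ f s x := continuousOn_univ.1 (hfc.uncurry_right x hx)
  rw [xiBound, pow_two, mul_assoc, inv_mul_cancel_left₀ hν.ne']
  exact abs_Fexp_le_general hc.aestronglyMeasurable (ae_of_all _ fun s ↦ hC s x hx) hν t
end

section
/- Let Ω ⊆ ℝⁿ and let f : ℝ × Ω → ℝ be continuous and bounded. For ν > 0 define F(t,x,ν) = ∫_{−∞}^{t} e^{−ν(t−s)} f(s,x) ds, h(u,x) = sup_{s∈ℝ} |(1/u) ∫₀^{u} f(s−r,x) dr| for u > 0, and ξ(x,ν) = ν² ∫₀^{∞} h(u,x)·u·e^{−νu} du. Then for each x ∈ Ω and ν > 0 the function t ↦ F(t,x,ν) is differentiable and |∂F/∂t(t,x,ν) − f(t,x)| ≤ ξ(x,ν) for all t ∈ ℝ. -/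
open MeasureTheory Filter Metric

/-!
Write `F` for the exponentially weighted integral of `g` over the past. Pulling `e^{-νt}` out of
the integral, the product rule gives `F' = g - ν F` wherever `g` is continuous, so `F' - g = -ν F`.
Since `e^{-νr} = ν ∫_r^∞ e^{-νu} du`, Fubini gives
`F(t) = ∫₀^∞ e^{-νr} g(t - r) dr = ν ∫₀^∞ e^{-νu} (∫₀ᵘ g(t - r) dr) du`, and the inner integral is
`u` times a mean of `g` over an interval of length `u`.
-/

section ExpPastIntegral

variable {E : Type*} [NormedAddCommGroup E] [NormedSpace ℝ E] {g : ℝ → E} {ν : ℝ}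

lemma hasDerivAt_setIntegral_Iic [CompleteSpace E] {b t : ℝ} (hg : IntegrableOn g (Set.Iic b))
    (htb : t < b) (ht : ContinuousAt g t) :
    HasDerivAt (fun τ => ∫ s in Set.Iic τ, g s) (g t) t := by
  have hmeas : StronglyMeasurableAtFilter g (nhds t) :=
    ⟨Set.Iic b, Iic_mem_nhds htb, hg.aestronglyMeasurable⟩
  have hprim : HasDerivAt (fun τ => (∫ s in Set.Iic t, g s) + ∫ s in t..τ, g s) (g t) t :=
    (intervalIntegral.integral_hasDerivAt_right .refl hmeas ht).const_add _
  refine hprim.congr_of_eventuallyEq ?_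
  filter_upwards [Iio_mem_nhds htb] with τ hτ
  rw [← intervalIntegral.integral_Iic_sub_Iic (hg.mono_set (Set.Iic_subset_Iic.2 htb.le))
    (hg.mono_set (Set.Iic_subset_Iic.2 (le_of_lt hτ))), add_sub_cancel]

lemma setIntegral_Iic_eq_setIntegral_Ioi_sub (g : ℝ → E) (t : ℝ) :
    ∫ s in Set.Iic t, g s = ∫ r in Set.Ioi 0, g (t - r) := by
  have h := (volume.measurePreserving_sub_left t).setIntegral_preimage_emb
    (MeasurableEquiv.subLeft t).measurableEmbedding g (Set.Iio t)
  rw [Set.preimage_const_sub_Iio, sub_self] at h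
  rw [integral_Iic_eq_integral_Iio, h]

lemma integrableOn_mul_exp_neg_mul (hν : 0 < ν) :
    IntegrableOn (fun u => u * Real.exp (-ν * u)) (Set.Ioi 0) := by
  simpa only [Real.rpow_one] using
    integrableOn_rpow_mul_exp_neg_mul_rpow (s := 1) (by norm_num) one_pos hν

lemma setIntegral_indicator_exp (hν : 0 < ν) {r : ℝ} (hr : 0 ≤ r) :
    ∫ u in Set.Ioi 0, (Set.Ioi r).indicator (fun u => Real.exp (-ν * u)) u
      = ν⁻¹ * Real.exp (-ν * r) := by
  rw [setIntegral_indicator measurableSet_Ioi,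
    Set.inter_eq_self_of_subset_right (Set.Ioi_subset_Ioi hr),
    integral_exp_mul_Ioi (neg_lt_zero.2 hν), neg_div_neg_eq, div_eq_inv_mul]

lemma integrable_indicator_exp_smul_prod (hν : 0 < ν)
    (hg : IntegrableOn (fun r => Real.exp (-ν * r) • g r) (Set.Ioi 0)) :
    Integrable (fun p : ℝ × ℝ => (Set.Ioi p.1).indicator (fun u => Real.exp (-ν * u)) p.2 • g p.1)
      ((volume.restrict (Set.Ioi 0)).prod (volume.restrict (Set.Ioi 0))) := by
  have hgm : AEStronglyMeasurable g (volume.restrict (Set.Ioi 0)) := by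
    have hexp : Continuous fun r => Real.exp (ν * r) := by fun_prop
    refine (hexp.aestronglyMeasurable.smul hg.aestronglyMeasurable).congr (ae_of_all _ fun r => ?_)
    simp [smul_smul, ← Real.exp_add]
  have hkm : Measurable fun p : ℝ × ℝ =>
      (Set.Ioi p.1).indicator (fun u => Real.exp (-ν * u)) p.2 :=
    (by fun_prop : Measurable fun p : ℝ × ℝ => Real.exp (-ν * p.2)).indicator
      (measurableSet_lt measurable_fst measurable_snd)
  refine (integrable_prod_iff (hkm.aestronglyMeasurable.smul hgm.comp_fst)).2 ⟨?_, ?_⟩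
  · exact ae_of_all _ fun r => ((integrableOn_exp_mul_Ioi (neg_lt_zero.2 hν) 0).indicator
      measurableSet_Ioi).smul_const (g r)
  · refine IntegrableOn.congr_fun (hg.norm.const_mul ν⁻¹) (fun r hr => ?_) measurableSet_Ioi
    have hk (u : ℝ) : 0 ≤ (Set.Ioi r).indicator (fun u => Real.exp (-ν * u)) u :=
      Set.indicator_nonneg (fun u _ => (Real.exp_pos _).le) u
    simp only [Pi.smul_apply', norm_smul, Real.norm_of_nonneg (hk _),
      Real.norm_of_nonneg (Real.exp_pos _).le]
    rw [integral_mul_const, setIntegral_indicator_exp hν (le_of_lt hr), mul_assoc]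

lemma setIntegral_indicator_smul_eq_intervalIntegral (k : ℝ → ℝ) (g : ℝ → E) {u : ℝ}
    (hu : 0 ≤ u) :
    ∫ r in Set.Ioi 0, (Set.Ioi r).indicator k u • g r = k u • ∫ r in (0 : ℝ)..u, g r := by
  have hswap (r : ℝ) : (Set.Ioi r).indicator k u • g r
      = (Set.Iio u).indicator (fun r => k u • g r) r := by
    by_cases hr : r < u <;> simp [hr]
  simp only [hswap]
  rw [setIntegral_indicator measurableSet_Iio, Set.Ioi_inter_Iio, integral_smul,
    intervalIntegral.integral_of_le hu, integral_Ioc_eq_integral_Ioo]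

lemma setIntegral_exp_smul_eq_smul_setIntegral_exp_smul_primitive [CompleteSpace E] (hν : 0 < ν)
    (hg : IntegrableOn (fun r => Real.exp (-ν * r) • g r) (Set.Ioi 0)) :
    ∫ r in Set.Ioi 0, Real.exp (-ν * r) • g r
      = ν • ∫ u in Set.Ioi 0, Real.exp (-ν * u) • ∫ r in (0 : ℝ)..u, g r := by
  rw [← inv_smul_eq_iff₀ hν.ne', ← integral_smul]
  calc ∫ r in Set.Ioi 0, ν⁻¹ • Real.exp (-ν * r) • g r
      = ∫ r in Set.Ioi 0, ∫ u in Set.Ioi 0,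
          (Set.Ioi r).indicator (fun u => Real.exp (-ν * u)) u • g r := by
        refine setIntegral_congr_fun measurableSet_Ioi fun r hr => ?_
        simp only [integral_smul_const, setIntegral_indicator_exp hν (le_of_lt hr), mul_smul]
    _ = ∫ u in Set.Ioi 0, ∫ r in Set.Ioi 0,
          (Set.Ioi r).indicator (fun u => Real.exp (-ν * u)) u • g r :=
        integral_integral_swap (integrable_indicator_exp_smul_prod hν hg)
    _ = ∫ u in Set.Ioi 0, Real.exp (-ν * u) • ∫ r in (0 : ℝ)..u, g r :=
        setIntegral_congr_fun measurableSet_Ioi fun u hu =>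
          setIntegral_indicator_smul_eq_intervalIntegral _ g (le_of_lt hu)

/-- The exponentially weighted integral over the past `∫_{-∞}^t e^{-ν(t-s)} g(s) ds`: the
vector-valued form of `Fexp`, at a fixed `x`. -/
noncomputable def expPastIntegral (ν : ℝ) (g : ℝ → E) (t : ℝ) : E :=
  ∫ s in Set.Iic t, Real.exp (-ν * (t - s)) • g s

lemma expPastIntegral_eq_exp_smul (ν : ℝ) (g : ℝ → E) (t : ℝ) :
    expPastIntegral ν g t
      = Real.exp (-ν * t) • ∫ s in Set.Iic t, Real.exp (ν * s) • g s := by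
  rw [expPastIntegral, ← integral_smul]
  refine integral_congr_ae (ae_of_all _ fun s => ?_)
  simp only [smul_smul, ← Real.exp_add]
  ring_nf

lemma hasDerivAt_expPastIntegral [CompleteSpace E] (hν : 0 < ν) (hg : MemLp g ⊤) {t : ℝ}
    (ht : ContinuousAt g t) :
    HasDerivAt (expPastIntegral ν g) (g t - ν • expPastIntegral ν g t) t := by
  have hint : IntegrableOn (fun s => Real.exp (ν * s) • g s) (Set.Iic (t + 1)) :=
    (integrableOn_exp_mul_Iic hν (t + 1)).smul_of_top_left (hg.restrict _)
  have hcont : ContinuousAt (fun s => Real.exp (ν * s) • g s) t :=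
    (by fun_prop : ContinuousAt (fun s => Real.exp (ν * s)) t).smul ht
  have hexp : HasDerivAt (fun τ => Real.exp (-ν * τ)) (Real.exp (-ν * t) * -ν) t := by
    simpa using ((hasDerivAt_id t).const_mul (-ν)).exp
  have hcancel : Real.exp (-ν * t) * Real.exp (ν * t) = 1 := by
    rw [← Real.exp_add, neg_mul, neg_add_cancel, Real.exp_zero]
  have hprod := hexp.smul (hasDerivAt_setIntegral_Iic hint (lt_add_one t) hcont)
  rw [funext (expPastIntegral_eq_exp_smul ν g)]
  refine hprod.congr_deriv ?_
  rw [smul_smul, hcancel, one_smul, mul_comm, mul_smul, neg_smul, ← sub_eq_add_neg]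

lemma expPastIntegral_eq_setIntegral_Ioi (ν : ℝ) (g : ℝ → E) (t : ℝ) :
    expPastIntegral ν g t = ∫ r in Set.Ioi 0, Real.exp (-ν * r) • g (t - r) := by
  rw [expPastIntegral, setIntegral_Iic_eq_setIntegral_Ioi_sub]
  simp only [sub_sub_cancel]

lemma expPastIntegral_eq_smul_setIntegral_exp_smul_primitive [CompleteSpace E] (hν : 0 < ν)
    (hg : MemLp g ⊤) (t : ℝ) :
    expPastIntegral ν g t
      = ν • ∫ u in Set.Ioi 0, Real.exp (-ν * u) • ∫ r in (0 : ℝ)..u, g (t - r) := by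
  rw [expPastIntegral_eq_setIntegral_Ioi]
  exact setIntegral_exp_smul_eq_smul_setIntegral_exp_smul_primitive hν
    ((integrableOn_exp_mul_Ioi (neg_lt_zero.2 hν) 0).smul_of_top_left
      ((hg.comp_measurePreserving (volume.measurePreserving_sub_left t)).restrict _))

/-- The supremum over `s` of the norm of the mean of `g` on `[s - u, s]`: the vector-valued form of
`hSup`, at a fixed `x`. As `⨆` of an unbounded family is `0`, it is meaningful only for `g` with
bounded means. -/
noncomputable def supNormMean (g : ℝ → E) (u : ℝ) : ℝ :=
  ⨆ s : ℝ, ‖(1 / u) • ∫ r in (0 : ℝ)..u, g (s - r)‖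

lemma norm_intervalIntegral_sub_le_lpNorm_mul_abs (hg : MemLp g ⊤) (s u : ℝ) :
    ‖∫ r in (0 : ℝ)..u, g (s - r)‖ ≤ lpNorm g ⊤ volume * |u| := by
  rw [intervalIntegral.integral_comp_sub_left]
  have hbound : ∀ᵐ r, r ∈ Set.uIoc (s - u) (s - 0) → ‖g r‖ ≤ lpNorm g ⊤ volume :=
    (ae_le_lpNorm_exponent_top hg).mono fun r hr _ => hr
  simpa using intervalIntegral.norm_integral_le_of_norm_le_const_ae hbound

lemma norm_mean_le_lpNorm (hg : MemLp g ⊤) (s u : ℝ) :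
    ‖(1 / u) • ∫ r in (0 : ℝ)..u, g (s - r)‖ ≤ lpNorm g ⊤ volume := by
  rw [norm_smul, norm_div, norm_one, one_div_mul_eq_div, Real.norm_eq_abs]
  exact div_le_of_le_mul₀ (abs_nonneg u) lpNorm_nonneg
    (norm_intervalIntegral_sub_le_lpNorm_mul_abs hg s u)

lemma supNormMean_nonneg (g : ℝ → E) (u : ℝ) : 0 ≤ supNormMean g u :=
  Real.iSup_nonneg fun _ => norm_nonneg _

lemma supNormMean_le_lpNorm (hg : MemLp g ⊤) (u : ℝ) : supNormMean g u ≤ lpNorm g ⊤ volume :=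
  ciSup_le fun s => norm_mean_le_lpNorm hg s u

lemma norm_intervalIntegral_sub_le_supNormMean_mul (hg : MemLp g ⊤) (t : ℝ) {u : ℝ}
    (hu : 0 < u) : ‖∫ r in (0 : ℝ)..u, g (t - r)‖ ≤ supNormMean g u * u := by
  have hbdd : BddAbove (Set.range fun s => ‖(1 / u) • ∫ r in (0 : ℝ)..u, g (s - r)‖) :=
    ⟨lpNorm g ⊤ volume, Set.forall_mem_range.2 fun s => norm_mean_le_lpNorm hg s u⟩
  have hle : ‖(1 / u) • ∫ r in (0 : ℝ)..u, g (t - r)‖ ≤ supNormMean g u := le_ciSup hbdd t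
  rwa [norm_smul, norm_div, norm_one, Real.norm_of_nonneg hu.le, one_div_mul_eq_div,
    div_le_iff₀ hu] at hle

lemma measurable_supNormMean (hg : MemLp g ⊤) : Measurable (supNormMean g) := by
  have hcont (s : ℝ) : Continuous fun u => ∫ r in (0 : ℝ)..u, g (s - r) :=
    intervalIntegral.continuous_primitive (fun _ _ =>
      (((hg.comp_measurePreserving (volume.measurePreserving_sub_left s)).locallyIntegrable
        le_top).integrableOn_isCompact isCompact_uIcc).intervalIntegrable) 0
  have hbdd (u : ℝ) : BddAbove (Set.range fun s => ‖∫ r in (0 : ℝ)..u, g (s - r)‖) :=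
    ⟨_, Set.forall_mem_range.2 fun s => norm_intervalIntegral_sub_le_lpNorm_mul_abs hg s u⟩
  -- The supremum runs over uncountably many `s`: lower semicontinuity gives its measurability.
  have hsup : Measurable fun u => ⨆ s : ℝ, ‖∫ r in (0 : ℝ)..u, g (s - r)‖ :=
    (lowerSemicontinuous_ciSup hbdd fun s => (hcont s).norm.lowerSemicontinuous).measurable
  have hfactor : supNormMean g = fun u => ‖1 / u‖ * ⨆ s : ℝ, ‖∫ r in (0 : ℝ)..u, g (s - r)‖ := by
    funext u
    simp only [supNormMean, norm_smul, Real.mul_iSup_of_nonneg (norm_nonneg _)]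
  rw [hfactor]
  fun_prop

lemma integrableOn_supNormMean_mul_mul_exp (hν : 0 < ν) (hg : MemLp g ⊤) :
    IntegrableOn (fun u => supNormMean g u * u * Real.exp (-ν * u)) (Set.Ioi 0) := by
  simp only [mul_assoc]
  refine (integrableOn_mul_exp_neg_mul hν).bdd_mul (c := lpNorm g ⊤ volume)
    (measurable_supNormMean hg).aestronglyMeasurable (ae_of_all _ fun u => ?_)
  rw [Real.norm_of_nonneg (supNormMean_nonneg g u)]
  exact supNormMean_le_lpNorm hg u

lemma norm_expPastIntegral_le [CompleteSpace E] (hν : 0 < ν) (hg : MemLp g ⊤) (t : ℝ) :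
    ‖expPastIntegral ν g t‖
      ≤ ν * ∫ u in Set.Ioi 0, supNormMean g u * u * Real.exp (-ν * u) := by
  rw [expPastIntegral_eq_smul_setIntegral_exp_smul_primitive hν hg, norm_smul,
    Real.norm_of_nonneg hν.le]
  gcongr
  refine norm_integral_le_of_norm_le (integrableOn_supNormMean_mul_mul_exp hν hg) ?_
  filter_upwards [ae_restrict_mem measurableSet_Ioi] with u hu
  rw [norm_smul, Real.norm_of_nonneg (Real.exp_pos _).le, mul_comm]
  gcongr
  exact norm_intervalIntegral_sub_le_supNormMean_mul hg t hu

theorem deriv_Fexp_sub_le_general [CompleteSpace E] (hν : 0 < ν) (hg : MemLp g ⊤) {t : ℝ}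
    (ht : ContinuousAt g t) :
    DifferentiableAt ℝ (expPastIntegral ν g) t ∧
      ‖deriv (expPastIntegral ν g) t - g t‖
        ≤ ν ^ 2 * ∫ u in Set.Ioi 0, supNormMean g u * u * Real.exp (-ν * u) := by
  have hderiv := hasDerivAt_expPastIntegral hν hg ht
  refine ⟨hderiv.differentiableAt, ?_⟩
  calc ‖deriv (expPastIntegral ν g) t - g t‖
      = ν * ‖expPastIntegral ν g t‖ := by
        rw [hderiv.deriv, sub_sub_cancel_left, norm_neg, norm_smul, Real.norm_of_nonneg hν.le]
    _ ≤ ν * (ν * ∫ u in Set.Ioi 0, supNormMean g u * u * Real.exp (-ν * u)) := by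
        gcongr
        exact norm_expPastIntegral_le hν hg t
    _ = ν ^ 2 * ∫ u in Set.Ioi 0, supNormMean g u * u * Real.exp (-ν * u) := by ring

end ExpPastIntegral

/-- Lemma 3.3(2): `t ↦ F(t,x,ν)` is differentiable and
`|∂F/∂t(t,x,ν) − f(t,x)| ≤ ξ(x,ν)`. -/
theorem deriv_Fexp_sub_le {n : ℕ} (Ω : Set (EuclideanSpace ℝ (Fin n)))
    (f : ℝ → EuclideanSpace ℝ (Fin n) → ℝ)
    (hfc : ContinuousOn (fun p : ℝ × EuclideanSpace ℝ (Fin n) => f p.1 p.2)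
      (Set.univ ×ˢ Ω))
    (hfb : ∃ C, ∀ t : ℝ, ∀ x ∈ Ω, |f t x| ≤ C)
    (x : EuclideanSpace ℝ (Fin n)) (hx : x ∈ Ω) (ν : ℝ) (hν : 0 < ν) :
    (∀ t, DifferentiableAt ℝ (fun τ => Fexp f x ν τ) t) ∧
    ∀ t, |deriv (fun τ => Fexp f x ν τ) t - f t x| ≤ xiBound f x ν := by
  obtain ⟨C, hC⟩ := hfb
  have hcont : Continuous fun s => f s x := continuousOn_univ.1 (hfc.uncurry_right x hx)
  have hmem : MemLp (fun s => f s x) ⊤ :=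
    memLp_top_of_bound hcont.aestronglyMeasurable C (ae_of_all _ fun s => hC s x hx)
  have hmain (t : ℝ) := deriv_Fexp_sub_le_general hν hmem (hcont.continuousAt (x := t))
  exact ⟨fun t => (hmain t).1, fun t => (hmain t).2⟩
end

section
/- Let Ω ⊆ ℝⁿ and let f : ℝ × Ω → ℝ be continuous and bounded, and for ν > 0 define F(t,x,ν) = ∫_{−∞}^{t} e^{−ν(t−s)} f(s,x) ds. Fix x ∈ Ω and suppose f(·,x) is ergodic uniformly under translations: there exists M ∈ ℝ such that (1/(2T)) ∫_{−T}^{T} f(t+r,x) dt → M as T → ∞, uniformly in r ∈ ℝ. Then for every ν > 0 and every r ∈ ℝ, (1/(2T)) ∫_{−T}^{T} F(t+r,x,ν) dt → M/ν as T → ∞. -/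
/-!
`F(·, x, ν)` is the convolution of `f(·, x)` with the integrable kernel `u ↦ e^{-νu} 1_{u ≥ 0}`,
of integral `1/ν`. By Fubini, the average of a convolution `k ⋆ g` over `[-T, T]` is the integral
against `k` of the averages of the translates `g(· - u)`. For bounded `g` all these averages tend
to the mean value of `g`, because a translation changes `∫_{-T}^{T} g` by a quantity bounded in `T`,
and dominated convergence shows that `k ⋆ g` has mean value `∫ k` times that of `g`.
-/

open MeasureTheory Filter Metric

open scoped ENNReal Topology Convolution

theorem memLp_top_of_continuousOn_univ_prod {S X E : Type*} [TopologicalSpace S]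
    [MeasurableSpace S] [OpensMeasurableSpace S] {μ : Measure S} [TopologicalSpace X]
    [NormedAddCommGroup E] [SecondCountableTopologyEither S E] {Ω : Set X} {f : S → X → E}
    (hfc : ContinuousOn (fun p : S × X => f p.1 p.2) (Set.univ ×ˢ Ω))
    (hfb : ∃ C, ∀ t : S, ∀ x ∈ Ω, ‖f t x‖ ≤ C) {x : X} (hx : x ∈ Ω) :
    MemLp (fun t => f t x) ∞ μ := by
  obtain ⟨C, hC⟩ := hfb
  have hslice : Continuous fun t => f t x :=
    hfc.comp_continuous (.prodMk_left x) fun _ => ⟨trivial, hx⟩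
  exact memLp_top_of_bound hslice.aestronglyMeasurable C (.of_forall fun t => hC t x hx)

section MeanValue

variable {E F G : Type*} [NormedAddCommGroup E] [NormedAddCommGroup F] [NormedAddCommGroup G]
  {g : ℝ → F} {m : F}

theorem intervalIntegrable_of_memLp {p : ℝ≥0∞} (hg : MemLp g p) (hp : 1 ≤ p) (a b : ℝ) :
    IntervalIntegrable g volume a b :=
  (intervalIntegrable_iff' (by finiteness)).2
    ((hg.locallyIntegrable hp).integrableOn_isCompact isCompact_uIcc)

theorem memLp_comp_add_right {p : ℝ≥0∞} (hg : MemLp g p) (r : ℝ) :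
    MemLp (fun t => g (t + r)) p :=
  hg.comp_measurePreserving (measurePreserving_add_right volume r)

variable [NormedSpace ℝ E] [NormedSpace ℝ F] [NormedSpace ℝ G]

/-- `HasMeanValue g m` says that the mean value of `g`, the limit of its averages over the symmetric
intervals `[-T, T]`, exists and equals `m`. -/
def HasMeanValue (g : ℝ → F) (m : F) : Prop :=
  Tendsto (fun T : ℝ => (1 / (2 * T)) • ∫ t in -T..T, g t) atTop (𝓝 m)

theorem norm_intervalIntegral_le_lpNorm_top_mul (hg : MemLp g ∞) (a b : ℝ) :
    ‖∫ t in a..b, g t‖ ≤ lpNorm g ∞ volume * |b - a| :=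
  intervalIntegral.norm_integral_le_of_norm_le_const_ae <|
    (ae_le_lpNorm_exponent_top hg).mono fun _ h _ => h

theorem norm_intervalIntegral_comp_add_right_sub_le (hg : MemLp g ∞) (a b r : ℝ) :
    ‖(∫ t in a..b, g (t + r)) - ∫ t in a..b, g t‖ ≤ 2 * lpNorm g ∞ volume * |r| := by
  have hint := intervalIntegrable_of_memLp hg le_top
  calc ‖(∫ t in a..b, g (t + r)) - ∫ t in a..b, g t‖
    _ = ‖(∫ t in b..b + r, g t) - ∫ t in a..a + r, g t‖ := by
        rw [intervalIntegral.integral_comp_add_right,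
          intervalIntegral.integral_interval_sub_interval_comm' (hint _ _) (hint _ _) (hint _ _)]
    _ ≤ lpNorm g ∞ volume * |b + r - b| + lpNorm g ∞ volume * |a + r - a| :=
        norm_sub_le_of_le (norm_intervalIntegral_le_lpNorm_top_mul hg _ _)
          (norm_intervalIntegral_le_lpNorm_top_mul hg _ _)
    _ = 2 * lpNorm g ∞ volume * |r| := by
        rw [add_sub_cancel_left, add_sub_cancel_left]
        ring

theorem HasMeanValue.comp_add_right (h : HasMeanValue g m) (hg : MemLp g ∞) (r : ℝ) :
    HasMeanValue (fun t => g (t + r)) m := by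
  have hscale : Tendsto (fun T : ℝ => 1 / (2 * T)) atTop (𝓝 0) :=
    (tendsto_id.const_mul_atTop two_pos).const_div_atTop 1
  have hdiff : Tendsto (fun T : ℝ =>
      (1 / (2 * T)) • ((∫ t in -T..T, g (t + r)) - ∫ t in -T..T, g t)) atTop (𝓝 0) :=
    hscale.zero_smul_isBoundedUnder_le <|
      isBoundedUnder_of ⟨_, fun T => norm_intervalIntegral_comp_add_right_sub_le hg (-T) T r⟩
  simpa only [HasMeanValue, smul_sub, sub_add_cancel, zero_add] using hdiff.add h

theorem integrable_convolution_integrand_restrict {k : ℝ → E} (L : E →L[ℝ] F →L[ℝ] G)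
    (hk : Integrable k) (hg : MemLp g ∞) {s : Set ℝ} (hs : volume s ≠ ∞) :
    Integrable (fun p : ℝ × ℝ => L (k p.2) (g (p.1 - p.2)))
      ((volume.restrict s).prod volume) := by
  have : IsFiniteMeasure (volume.restrict s) := isFiniteMeasure_restrict.2 hs
  have hsub : Measure.QuasiMeasurePreserving (fun p : ℝ × ℝ => p.1 - p.2)
      ((volume.restrict s).prod volume) volume :=
    (quasiMeasurePreserving_sub_of_right_invariant volume volume).mono_left <|
      Measure.absolutelyContinuous_restrict.prod .rfl
  exact L.integrable_of_bilin_of_bdd_right (lpNorm g ∞ volume) (hk.comp_snd _)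
    (hg.aestronglyMeasurable.comp_quasiMeasurePreserving hsub)
    (hsub.ae (ae_le_lpNorm_exponent_top hg))

theorem norm_average_comp_sub_le_lpNorm_top (hg : MemLp g ∞) {T : ℝ} (hT : 0 < T) (u : ℝ) :
    ‖(1 / (2 * T)) • ∫ t in -T..T, g (t - u)‖ ≤ lpNorm g ∞ volume := by
  have hbound := norm_intervalIntegral_le_lpNorm_top_mul hg (-T - u) (T - u)
  rw [show T - u - (-T - u) = 2 * T by ring, abs_of_pos (by positivity)] at hbound
  rw [intervalIntegral.integral_comp_sub_right, norm_smul, Real.norm_of_nonneg (by positivity),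
    one_div_mul_eq_div]
  exact div_le_of_le_mul₀ (by positivity) lpNorm_nonneg hbound

theorem continuous_intervalIntegral_comp_sub (hg : ∀ a b, IntervalIntegrable g volume a b)
    (a b : ℝ) : Continuous fun u => ∫ t in a..b, g (t - u) := by
  have hprim : Continuous fun c => ∫ t in (0 : ℝ)..c, g t :=
    intervalIntegral.continuous_primitive hg 0
  have hsub (u : ℝ) : ∫ t in a..b, g (t - u) =
      (∫ t in (0 : ℝ)..b - u, g t) - ∫ t in (0 : ℝ)..a - u, g t := by
    rw [intervalIntegral.integral_comp_sub_right,
      intervalIntegral.integral_interval_sub_left (hg _ _) (hg _ _)]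
  simp only [hsub]
  fun_prop

variable [CompleteSpace F] [CompleteSpace G]

theorem intervalIntegral_convolution {k : ℝ → E} (L : E →L[ℝ] F →L[ℝ] G) (hk : Integrable k)
    (hg : MemLp g ∞) (a b : ℝ) :
    ∫ t in a..b, (k ⋆[L] g) t = ∫ u, L (k u) (∫ t in a..b, g (t - u)) := by
  have hint (u : ℝ) : IntervalIntegrable (fun t => g (t - u)) volume a b := by
    simpa only [sub_eq_add_neg] using
      intervalIntegrable_of_memLp (memLp_comp_add_right hg (-u)) le_top a b
  have hfin : volume (Set.uIoc a b) ≠ ∞ := by simp [Set.uIoc]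
  simp only [convolution_def, ← (L _).intervalIntegral_comp_comm (hint _)]
  exact intervalIntegral_integral_swap (f := fun t u => L (k u) (g (t - u)))
    (integrable_convolution_integrand_restrict L hk hg hfin)

theorem HasMeanValue.convolution [CompleteSpace E] {k : ℝ → E}
    (L : E →L[ℝ] F →L[ℝ] G) (h : HasMeanValue g m) (hg : MemLp g ∞) (hk : Integrable k) :
    HasMeanValue (k ⋆[L] g) (L (∫ u, k u) m) := by
  have havg (T : ℝ) : (1 / (2 * T)) • ∫ t in -T..T, (k ⋆[L] g) t =
      ∫ u, L (k u) ((1 / (2 * T)) • ∫ t in -T..T, g (t - u)) := by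
    simp only [intervalIntegral_convolution L hk hg, ← integral_smul, map_smul]
  have hmean : L (∫ u, k u) m = ∫ u, L (k u) m := ((L.flip m).integral_comp_comm hk).symm
  simp only [HasMeanValue, havg, hmean]
  refine tendsto_integral_filter_of_dominated_convergence
    (fun u => ‖L‖ * ‖k u‖ * lpNorm g ∞ volume) ?_ ?_ ?_ ?_
  · refine .of_forall fun T => L.aestronglyMeasurable_comp₂ hk.aestronglyMeasurable ?_
    exact ((continuous_intervalIntegral_comp_sub (intervalIntegrable_of_memLp hg le_top) _ _)
      |>.const_smul _).aestronglyMeasurable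
  · filter_upwards [eventually_gt_atTop 0] with T hT
    refine .of_forall fun u => L.le_of_opNorm₂_le_of_le le_rfl le_rfl ?_
    exact norm_average_comp_sub_le_lpNorm_top hg hT u
  · exact (hk.norm.const_mul _).mul_const _
  · refine .of_forall fun u => ((L (k u)).continuous.tendsto m).comp ?_
    simpa only [HasMeanValue, sub_eq_add_neg] using h.comp_add_right hg (-u)

end MeanValue

section ExpKernel

variable {ν : ℝ}

/-- The causal exponential kernel `u ↦ e^{-νu} 1_{u ≥ 0}`, for which `F(·, x, ν)` is the
convolution with `f(·, x)`. -/
noncomputable def expKernel (ν : ℝ) : ℝ → ℝ :=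
  (Set.Ici 0).indicator fun u => Real.exp (-ν * u)

theorem integrable_expKernel (hν : 0 < ν) : Integrable (expKernel ν) :=
  (integrable_indicator_iff measurableSet_Ici).2 <|
    (integrableOn_Ici_iff_integrableOn_Ioi (by finiteness)).2 <|
      integrableOn_exp_mul_Ioi (neg_neg_of_pos hν) 0

theorem integral_expKernel (hν : 0 < ν) : ∫ u, expKernel ν u = ν⁻¹ := by
  rw [expKernel, integral_indicator measurableSet_Ici, integral_Ici_eq_integral_Ioi,
    integral_exp_mul_Ioi (neg_neg_of_pos hν), mul_zero, Real.exp_zero, neg_div_neg_eq, one_div]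

variable {E : Type*} [NormedAddCommGroup E] [NormedSpace ℝ E]

theorem expKernel_convolution (ν : ℝ) (g : ℝ → E) (t : ℝ) :
    (expKernel ν ⋆ g) t = ∫ s in Set.Iic t, Real.exp (-ν * (t - s)) • g s := by
  rw [convolution_lsmul_swap, ← integral_indicator measurableSet_Iic]
  congr with s
  simp [expKernel, Set.indicator_apply, ite_smul]

theorem Fexp_ergodic_general [CompleteSpace E] {g : ℝ → E} (hg : MemLp g ∞) {m : E}
    (hm : HasMeanValue g m) (hν : 0 < ν) (r : ℝ) :
    HasMeanValue (fun t => ∫ s in Set.Iic (t + r), Real.exp (-ν * (t + r - s)) • g s)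
      (ν⁻¹ • m) := by
  have hconv := (hm.comp_add_right hg r).convolution (.lsmul ℝ ℝ)
    (memLp_comp_add_right hg r) (integrable_expKernel hν)
  have hshift (t : ℝ) : (expKernel ν ⋆ fun s => g (s + r)) t = (expKernel ν ⋆ g) (t + r) := by
    simp only [convolution_def, sub_add_eq_add_sub]
  rw [integral_expKernel hν, funext hshift] at hconv
  simpa only [expKernel_convolution, ContinuousLinearMap.lsmul_apply] using hconv

end ExpKernel

/-- Lemma 3.3(3): if `f(·,x)` is ergodic with mean `M`,
uniformly under translations, then `F(·,x,ν)` is ergodic with mean `M/ν`. -/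
theorem Fexp_ergodic {n : ℕ} (Ω : Set (EuclideanSpace ℝ (Fin n)))
    (f : ℝ → EuclideanSpace ℝ (Fin n) → ℝ)
    (hfc : ContinuousOn (fun p : ℝ × EuclideanSpace ℝ (Fin n) => f p.1 p.2)
      (Set.univ ×ˢ Ω))
    (hfb : ∃ C, ∀ t : ℝ, ∀ x ∈ Ω, |f t x| ≤ C)
    (x : EuclideanSpace ℝ (Fin n)) (hx : x ∈ Ω) (M : ℝ)
    (hM : TendstoUniformly
      (fun T : ℝ => fun r : ℝ => (1 / (2 * T)) * ∫ t in -T..T, f (t + r) x)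
      (fun _ => M) Filter.atTop)
    (ν : ℝ) (hν : 0 < ν) (r : ℝ) :
    Filter.Tendsto
      (fun T : ℝ => (1 / (2 * T)) * ∫ t in -T..T, Fexp f x ν (t + r))
      Filter.atTop (nhds (M / ν)) := by
  rw [div_eq_inv_mul]
  exact Fexp_ergodic_general (memLp_top_of_continuousOn_univ_prod hfc hfb hx)
    (by simpa only [HasMeanValue, smul_eq_mul, add_zero] using hM.tendsto_at 0) hν r
end
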